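/- arXiv:1204.0429 — 2 statements merged into one kernel-verified Lean document; each statement's English description precedes it below -/
import Mathlib

section
/- Let X be an N-dimensional random vector whose distribution is absolutely continuous with respect to N-dimensional Lebesgue measure, with zero mean and positive definite covariance matrix C_X = W Σ Wᵀ (eigenvalue decomposition with orthogonal W). Let X̃_M = W I_Mᵀ I_M Wᵀ X, where I_M is the M×N rectangular identity matrix with M < N (i.e., the PCA reconstruction from the first M principal components). Then the relative information loss is l(X→X̃_M) = (N−M)/N. -/
/-!
With `U = Wᵀ X` the reconstruction is `Y = W (tr M U)`, where `tr M` keeps the first `M`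
coordinates; `U` is again absolutely continuous and has finite second moments, because a positive
diagonal entry of `C` forces the corresponding second moment of `X` to be finite. The key claim is
that the conditional entropy `H(⌊kX⌋ | Y)` is `(N - M + o(1)) log k` for every `M ≤ N`
(`tendsto_condEnt_div_log`). Its case `M = 0`, where `Y` is constant, gives
`H(⌊kX⌋) = (N + o(1)) log k`, and the theorem is the quotient of the two asymptotics.

Write `p` for the conditional probability, given `Y`, of the cell `⌊kX⌋` in which `X` lies. The
conditional entropy is the mean of `-log p` (`condEnt_eq_lintegral`).

* Upper bound (`lintegral_info_le`). By Gibbs' inequality the mean of `-log p` is at most that of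
  `-log t` plus a constant, whenever `t` is dominated by a kernel of bounded mass from `Y` to cells.
  The kernel guesses the cell of `U` in the rotated grid: exactly known for the coordinates `i < M`,
  and with weight `(1/k) / (1 + ⌊U i⌋ ^ 2)` for the others. Each cell of the rotated grid meets a
  bounded number of original cells, so the kernel has bounded mass, while
  `-log t ≤ (N - M) log k + ∑ i, (|U i| + 1) ^ 2`.
* Lower bound (`tendsto_bad_zero`). When `U` is replaced by a Gaussian vector, given its first `M`
  coordinates each cell has probability `O(k ^ (-(N - M)))`, since a cell has diameter `O(1/k)`.
  By Fubini the mean of `p` under the Gaussian law is `O(k ^ (-(N - M)))`, and by Markov's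
  inequality the set `{p ≥ log k / k ^ (N - M)}` has Gaussian measure tending to `0`. As the law of
  `U` is absolutely continuous, the probability of this set tends to `0` as well, and off it
  `-log p ≥ (N - M) log k - log log k`.
-/

open MeasureTheory ProbabilityTheory Filter Real Set

/-- Component quantization `x ↦ ⌊kx⌋/k`. -/
noncomputable def qz (k : ℕ) (x : ℝ) : ℝ := ⌊(k : ℝ) * x⌋ / k

/-- Shannon entropy (in nats) of a measure, computed from its atoms. -/
noncomputable def mEnt {α : Type*} [MeasurableSpace α] (μ : Measure α) : ℝ :=
  ∑' a : α, Real.negMulLog (μ {a}).toReal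

/-- Conditional Shannon entropy `H(Z | Y)`, via the regular conditional distribution. -/
noncomputable def condEnt {Ω α β : Type*} [MeasurableSpace Ω] [MeasurableSpace α]
    [StandardBorelSpace α] [Nonempty α] [MeasurableSpace β]
    (P : Measure Ω) [IsFiniteMeasure P] (Z : Ω → α) (Y : Ω → β) : ℝ :=
  ∫ y, mEnt ((condDistrib Z Y P) y) ∂(P.map Y)



/-! ### Conditional entropy of countable-valued variables -/

lemma mEnt_map_of_injective {α α' : Type*} [MeasurableSpace α] [MeasurableSpace α']
    [Countable α] [MeasurableSingletonClass α] [MeasurableSingletonClass α']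
    (μ : Measure α) {e : α → α'} (he : Function.Injective e) (hm : Measurable e) :
    mEnt (μ.map e) = mEnt μ := by
  have hs : Function.support (fun a' => Real.negMulLog ((μ.map e) {a'}).toReal) ⊆ Set.range e := by
    intro a' ha'
    by_contra hn
    apply ha'
    have : e ⁻¹' {a'} = ∅ := by
      ext a
      simp only [mem_preimage, mem_singleton_iff, mem_empty_iff_false, iff_false]
      exact fun h => hn ⟨a, h⟩
    simp [Measure.map_apply hm (measurableSet_singleton a'), this]
  unfold mEnt
  rw [← he.tsum_eq hs]
  refine tsum_congr fun a => ?_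
  rw [Measure.map_apply hm (measurableSet_singleton _)]
  congr 3
  ext b
  simp [he.eq_iff]

lemma condEnt_comp_injective {Ω α α' β : Type*} [MeasurableSpace Ω]
    [MeasurableSpace α] [StandardBorelSpace α] [Nonempty α]
    [MeasurableSpace α'] [StandardBorelSpace α'] [Nonempty α'] [MeasurableSpace β]
    [Countable α] (P : Measure Ω) [IsFiniteMeasure P] {Z : Ω → α} (hZ : Measurable Z)
    (Y : Ω → β) {e : α → α'} (he : Function.Injective e) (hm : Measurable e) :
    condEnt P (fun ω => e (Z ω)) Y = condEnt P Z Y := by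
  unfold condEnt
  refine integral_congr_ae ?_
  filter_upwards [condDistrib_comp Y hZ.aemeasurable hm] with y hy
  have : condDistrib (fun ω => e (Z ω)) Y P y = (condDistrib Z Y P y).map e := by
    rw [← Kernel.map_apply _ hm, ← hy]; rfl
  rw [this, mEnt_map_of_injective _ he hm]

lemma condEnt_const {Ω α β : Type*} [MeasurableSpace Ω]
    [MeasurableSpace α] [StandardBorelSpace α] [Nonempty α] [MeasurableSpace β]
    (P : Measure Ω) [IsProbabilityMeasure P] {Z : Ω → α} (hZ : Measurable Z) (c : β) :
    condEnt P Z (fun _ => c) = mEnt (P.map Z) := by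
  have h : condDistrib Z (fun _ : Ω => c) P =ᵐ[P.map (fun _ => c)] Kernel.const β (P.map Z) :=
    condDistrib_ae_eq_of_measure_eq_compProd _ hZ.aemeasurable (by
      rw [Measure.compProd_const]
      exact (indepFun_iff_map_prod_eq_prod_map_map (by fun_prop) hZ.aemeasurable).1
        (indepFun_const_left c Z))
  have : IsProbabilityMeasure (P.map (fun _ : Ω => c)) :=
    Measure.isProbabilityMeasure_map (by fun_prop)
  unfold condEnt
  rw [integral_congr_ae (g := fun _ => mEnt (P.map Z))]
  · simp
  · filter_upwards [h] with y hy
    rw [hy, Kernel.const_apply]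

section Countable

variable {Ω α β : Type*} [MeasurableSpace Ω] [MeasurableSpace α] [StandardBorelSpace α]
  [Nonempty α] [Countable α] [MeasurableSpace β]

/-- Disintegration of an expectation along `Y` when `Z` is countable-valued. -/
lemma lintegral_condDistrib_tsum (P : Measure Ω) [IsProbabilityMeasure P] {Z : Ω → α}
    (hZ : Measurable Z) {Y : Ω → β} (hY : Measurable Y) {f : β → α → ENNReal}
    (hf : Measurable (Function.uncurry f)) :
    ∫⁻ ω, f (Y ω) (Z ω) ∂P = ∫⁻ y, ∑' a, f y a * condDistrib Z Y P y {a} ∂(P.map Y) := by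
  have h1 : ∫⁻ ω, f (Y ω) (Z ω) ∂P
      = ∫⁻ x, Function.uncurry f x ∂(P.map (fun ω => (Y ω, Z ω))) := by
    rw [lintegral_map hf (hY.prodMk hZ)]; rfl
  rw [h1, ← compProd_map_condDistrib hZ.aemeasurable, Measure.lintegral_compProd hf]
  refine lintegral_congr fun y => ?_
  rw [lintegral_countable']; rfl

lemma measurable_condDistrib_singleton (P : Measure Ω) [IsProbabilityMeasure P] (Z : Ω → α)
    (Y : Ω → β) :
    Measurable (Function.uncurry fun (y : β) (a : α) => condDistrib Z Y P y {a}) :=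
  measurable_from_prod_countable_left fun a =>
    Kernel.measurable_coe _ (measurableSet_singleton a)

/-- The conditional entropy is the mean of the conditional information density. -/
lemma condEnt_eq_lintegral (P : Measure Ω) [IsProbabilityMeasure P] {Z : Ω → α}
    (hZ : Measurable Z) {Y : Ω → β} (hY : Measurable Y)
    (hfin : ∫⁻ ω, ENNReal.ofReal (-Real.log (condDistrib Z Y P (Y ω) {Z ω}).toReal) ∂P ≠ ⊤) :
    condEnt P Z Y
      = (∫⁻ ω, ENNReal.ofReal (-Real.log (condDistrib Z Y P (Y ω) {Z ω}).toReal) ∂P).toReal := by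
  have hmeas := measurable_condDistrib_singleton P Z Y
  have hL : ∫⁻ ω, ENNReal.ofReal (-Real.log (condDistrib Z Y P (Y ω) {Z ω}).toReal) ∂P
      = ∫⁻ y, ∑' a, ENNReal.ofReal (Real.negMulLog (condDistrib Z Y P y {a}).toReal)
          ∂(P.map Y) := by
    rw [lintegral_condDistrib_tsum P hZ hY
      (f := fun y a => ENNReal.ofReal (-Real.log (condDistrib Z Y P y {a}).toReal))
      (by exact (Real.measurable_log.comp hmeas.ennreal_toReal).neg.ennreal_ofReal)]
    refine lintegral_congr fun y => tsum_congr fun a => ?_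
    have hne : condDistrib Z Y P y {a} ≠ ⊤ := measure_ne_top _ _
    conv_lhs => rw [← ENNReal.ofReal_toReal hne, mul_comm,
      ← ENNReal.ofReal_mul ENNReal.toReal_nonneg]
    rw [ENNReal.ofReal_toReal hne, Real.negMulLog]
    congr 1
    ring
  have hm2 : Measurable fun y => ∑' a,
      ENNReal.ofReal (Real.negMulLog (condDistrib Z Y P y {a}).toReal) := by
    refine Measurable.tsum fun a => ?_
    have := Kernel.measurable_coe (condDistrib Z Y P) (measurableSet_singleton a)
    exact (Real.continuous_negMulLog.measurable.comp this.ennreal_toReal).ennreal_ofReal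
  rw [hL] at hfin ⊢
  rw [← integral_toReal hm2.aemeasurable (ae_lt_top hm2 hfin)]
  unfold condEnt mEnt
  congr 1
  ext y
  rw [ENNReal.tsum_toReal_eq (fun a => ENNReal.ofReal_ne_top)]
  refine tsum_congr fun a => ?_
  rw [ENNReal.toReal_ofReal]
  refine Real.negMulLog_nonneg ENNReal.toReal_nonneg ?_
  exact ENNReal.toReal_le_of_le_ofReal zero_le_one (by simpa using prob_le_one)

lemma ae_condDistrib_singleton_ne_zero (P : Measure Ω) [IsProbabilityMeasure P] {Z : Ω → α}
    (hZ : Measurable Z) {Y : Ω → β} (hY : Measurable Y) :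
    ∀ᵐ ω ∂P, condDistrib Z Y P (Y ω) {Z ω} ≠ 0 := by
  classical
  have hmeas := measurable_condDistrib_singleton P Z Y
  have hS : MeasurableSet {x : β × α | condDistrib Z Y P x.1 {x.2} = 0} :=
    hmeas (measurableSet_singleton 0)
  have h0 : ∫⁻ ω, (if condDistrib Z Y P (Y ω) {Z ω} = 0 then 1 else 0 : ENNReal) ∂P = 0 := by
    rw [lintegral_condDistrib_tsum P hZ hY
      (f := fun y a => if condDistrib Z Y P y {a} = 0 then 1 else 0)
      (by exact Measurable.ite hS measurable_const measurable_const)]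
    simp only [ite_mul, one_mul, zero_mul]
    have : ∀ y, ∑' a, (if condDistrib Z Y P y {a} = 0 then condDistrib Z Y P y {a} else 0) = 0 := by
      intro y
      rw [ENNReal.tsum_eq_zero]
      intro a
      split_ifs with h
      · exact h
      · rfl
    simp [this]
  have hm : Measurable fun ω => (if condDistrib Z Y P (Y ω) {Z ω} = 0 then 1 else 0 : ENNReal) :=
    (Measurable.ite hS measurable_const measurable_const).comp (hY.prodMk hZ)
  rw [lintegral_eq_zero_iff hm] at h0
  filter_upwards [h0] with ω hω h
  simp [h] at hω

/-- Gibbs' inequality: if the kernel `q` has total mass at most `K` and `t ω ≤ q (Y ω) {Z ω}`, then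
`-log t` dominates the conditional information density in mean, up to `K`. -/
lemma lintegral_neg_log_condDistrib_le (P : Measure Ω) [IsProbabilityMeasure P] {Z : Ω → α}
    (hZ : Measurable Z) {Y : Ω → β} (hY : Measurable Y) {q : β → α → ENNReal}
    (hq : Measurable (Function.uncurry q)) {K : ENNReal} (hK : ∀ y, ∑' a, q y a ≤ K)
    {t : Ω → ℝ} (ht : ∀ ω, 0 < t ω) (htq : ∀ ω, ENNReal.ofReal (t ω) ≤ q (Y ω) (Z ω)) :
    ∫⁻ ω, ENNReal.ofReal (-Real.log (condDistrib Z Y P (Y ω) {Z ω}).toReal) ∂P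
      ≤ ∫⁻ ω, ENNReal.ofReal (-Real.log (t ω)) ∂P + K := by
  have hmeas := measurable_condDistrib_singleton P Z Y
  have hr : Measurable (Function.uncurry fun y a => q y a / condDistrib Z Y P y {a}) :=
    hq.div hmeas
  have h2 : ∫⁻ ω, q (Y ω) (Z ω) / condDistrib Z Y P (Y ω) {Z ω} ∂P ≤ K := by
    rw [lintegral_condDistrib_tsum P hZ hY hr]
    have : IsProbabilityMeasure (P.map Y) := Measure.isProbabilityMeasure_map hY.aemeasurable
    calc _ ≤ ∫⁻ _, K ∂(P.map Y) := by
            refine lintegral_mono fun y => le_trans (ENNReal.tsum_le_tsum fun a => ?_) (hK y)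
            rw [mul_comm]
            exact ENNReal.mul_div_le
      _ = K := by simp
  calc _ ≤ ∫⁻ ω, (ENNReal.ofReal (-Real.log (t ω))
            + q (Y ω) (Z ω) / condDistrib Z Y P (Y ω) {Z ω}) ∂P := by
          refine lintegral_mono fun ω => ?_
          set p := condDistrib Z Y P (Y ω) {Z ω} with hp
          rcases eq_or_ne p 0 with h0 | h0
          · simp [h0]
          have htop : p ≠ ⊤ := measure_ne_top _ _
          have hpos : 0 < p.toReal := ENNReal.toReal_pos h0 htop
          have hlog := Real.log_le_sub_one_of_pos (div_pos (ht ω) hpos)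
          rw [Real.log_div (ht ω).ne' hpos.ne'] at hlog
          calc ENNReal.ofReal (-Real.log p.toReal)
              ≤ ENNReal.ofReal (-Real.log (t ω) + t ω / p.toReal) :=
                ENNReal.ofReal_le_ofReal (by linarith)
            _ ≤ ENNReal.ofReal (-Real.log (t ω)) + ENNReal.ofReal (t ω / p.toReal) :=
                ENNReal.ofReal_add_le
            _ ≤ _ := by
                gcongr
                rw [ENNReal.ofReal_div_of_pos hpos, ENNReal.ofReal_toReal htop]
                exact ENNReal.div_le_div_right (htq ω) _
    _ = ∫⁻ ω, ENNReal.ofReal (-Real.log (t ω)) ∂P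
          + ∫⁻ ω, q (Y ω) (Z ω) / condDistrib Z Y P (Y ω) {Z ω} ∂P :=
        lintegral_add_right _ (hr.comp (hY.prodMk hZ))
    _ ≤ _ := by gcongr

end Countable

/-! ### Quantization and rotation -/

/-- The integer vector `⌊k x⌋` labelling the quantization cell of `x`. -/
noncomputable def zq {N : ℕ} (k : ℕ) (x : Fin N → ℝ) : Fin N → ℤ := fun i => ⌊(k : ℝ) * x i⌋

/-- The vector that keeps the first `M` coordinates of `u` and sets the others to zero. -/
noncomputable def tr {N : ℕ} (M : ℕ) (u : Fin N → ℝ) : Fin N → ℝ :=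
  fun i => if (i : ℕ) < M then u i else 0

/-- The entrywise `ℓ¹` norm of a matrix. -/
noncomputable def matSum {N : ℕ} (W : Matrix (Fin N) (Fin N) ℝ) : ℝ := ∑ i, ∑ j, |W i j|

lemma matSum_nonneg {N : ℕ} (W : Matrix (Fin N) (Fin N) ℝ) : 0 ≤ matSum W :=
  Finset.sum_nonneg fun _ _ => Finset.sum_nonneg fun _ _ => abs_nonneg _

lemma abs_mulVec_le {N : ℕ} (W : Matrix (Fin N) (Fin N) ℝ) {x : Fin N → ℝ} {r : ℝ} (hr : 0 ≤ r)
    (hx : ∀ i, |x i| ≤ r) (i : Fin N) : |(W.mulVec x) i| ≤ matSum W * r := by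
  calc |(W.mulVec x) i| ≤ ∑ j, |W i j * x j| := by
        simp only [Matrix.mulVec, dotProduct]
        exact Finset.abs_sum_le_sum_abs _ _
    _ ≤ ∑ j, |W i j| * r := Finset.sum_le_sum fun j _ => by
        rw [abs_mul]; exact mul_le_mul_of_nonneg_left (hx j) (abs_nonneg _)
    _ = (∑ j, |W i j|) * r := (Finset.sum_mul _ _ _).symm
    _ ≤ matSum W * r := by
        refine mul_le_mul_of_nonneg_right ?_ hr
        exact Finset.single_le_sum (f := fun i => ∑ j, |W i j|)
          (fun _ _ => Finset.sum_nonneg fun _ _ => abs_nonneg _) (Finset.mem_univ i)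

lemma measurable_mulVec {N : ℕ} (W : Matrix (Fin N) (Fin N) ℝ) :
    Measurable fun x : Fin N → ℝ => W.mulVec x :=
  (Continuous.matrix_mulVec continuous_const continuous_id).measurable

lemma measurable_zq {N : ℕ} (k : ℕ) : Measurable (zq k : (Fin N → ℝ) → Fin N → ℤ) :=
  measurable_pi_lambda _ fun i => Int.measurable_floor.comp ((measurable_pi_apply i).const_mul _)

lemma measurable_tr {N : ℕ} (M : ℕ) : Measurable (tr M : (Fin N → ℝ) → Fin N → ℝ) := by
  refine measurable_pi_lambda _ fun i => ?_
  unfold tr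
  split_ifs
  · exact measurable_pi_apply i
  · exact measurable_const

/-- Points in the same quantization cell have coordinates, in any basis, at distance `O(1/k)`. -/
lemma abs_sub_le_of_zq_eq {N : ℕ} {W : Matrix (Fin N) (Fin N) ℝ} (hW : W.transpose * W = 1) {k : ℕ}
    (hk : 0 < k) {u u' : Fin N → ℝ} (h : zq k (W.mulVec u) = zq k (W.mulVec u')) (i : Fin N) :
    |u i - u' i| ≤ matSum W.transpose / k := by
  have hk' : (0 : ℝ) < k := by exact_mod_cast hk
  have h1 : ∀ j, |(W.mulVec u - W.mulVec u') j| ≤ 1 / k := by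
    intro j
    have := Int.abs_sub_lt_one_of_floor_eq_floor (congrFun h j)
    rw [← mul_sub, abs_mul, abs_of_pos hk'] at this
    rw [le_div_iff₀ hk', mul_comm]
    exact this.le
  have h2 := abs_mulVec_le W.transpose (by positivity) h1 i
  rw [← Matrix.mulVec_sub, Matrix.mulVec_mulVec, hW, Matrix.one_mulVec] at h2
  simpa [div_eq_mul_inv] using h2

/-! ### Upper bound -/

/-- Weights on `ℤ` with finite sum and polynomial decay. -/
noncomputable def gw (j : ℤ) : ℝ := 1 / (1 + (j : ℝ) ^ 2)

/-- The weights `gw` spread evenly over the `k` subintervals of each unit interval. -/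
noncomputable def gwk (k : ℕ) (v : ℤ) : ℝ := 1 / k * gw (v / k)

lemma gw_pos (j : ℤ) : 0 < gw j := by unfold gw; positivity

lemma gwk_pos {k : ℕ} (h : 0 < k) (v : ℤ) : 0 < gwk k v := by
  have := gw_pos (v / k)
  unfold gwk; positivity

lemma summable_gw : Summable gw := by
  have h := (Real.summable_one_div_int_add_rpow (1 / 2) 2).2 (by norm_num)
  refine Summable.of_nonneg_of_le (fun j => (gw_pos j).le) (fun j => ?_) (h.mul_left 2)
  have hne : (j : ℝ) + 1 / 2 ≠ 0 := by
    intro h0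
    have : (2 * j + 1 : ℤ) = 0 := by
      have : (2 * (j : ℝ) + 1) = 0 := by linarith
      exact_mod_cast this
    omega
  rw [Real.rpow_two, sq_abs, gw, ← mul_div_assoc, mul_one,
    div_le_div_iff₀ (by positivity) (by positivity)]
  nlinarith [sq_nonneg ((j : ℝ) - 1 / 2)]

lemma tsum_gw_ne_top : ∑' j, ENNReal.ofReal (gw j) ≠ ⊤ :=
  summable_gw.tsum_ofReal_ne_top

lemma one_le_tsum_gw : 1 ≤ ∑' j, ENNReal.ofReal (gw j) := by
  refine le_trans ?_ (ENNReal.le_tsum 0)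
  simp [gw]

lemma tsum_gwk {k : ℕ} (h : 0 < k) :
    ∑' v, ENNReal.ofReal (gwk k v) = ∑' j, ENNReal.ofReal (gw j) := by
  have : NeZero k := ⟨h.ne'⟩
  have hk' : (0 : ℝ) < k := by exact_mod_cast h
  rw [← (Int.divModEquiv k).symm.tsum_eq, ENNReal.tsum_prod']
  refine tsum_congr fun j => ?_
  have : ∀ r : Fin k, gwk k ((Int.divModEquiv k).symm (j, r)) = 1 / k * gw j := by
    intro r
    have := congrArg Prod.fst ((Int.divModEquiv k).apply_symm_apply (j, r))
    unfold gwk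
    congr 2
  simp only [this, tsum_fintype, Finset.sum_const, Finset.card_univ, Fintype.card_fin]
  rw [← ENNReal.ofReal_nsmul]
  congr 1
  rw [nsmul_eq_mul]
  field_simp

/-- Factor of `upMeas`: a point mass at the known cell for the first `M` coordinates, the weights
`gwk` for the others. -/
noncomputable def upFac {N : ℕ} (M k : ℕ) (a : Fin N → ℤ) (i : Fin N) : Measure ℤ :=
  if (i : ℕ) < M then Measure.dirac (a i)
  else Measure.count.withDensity fun v => ENNReal.ofReal (gwk k v)

/-- A guess for the law of the quantized rotated vector when the cells `a i`, `i < M`, of its first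
`M` coordinates are known. -/
noncomputable def upMeas {N : ℕ} (M k : ℕ) (a : Fin N → ℤ) : Measure (Fin N → ℤ) :=
  Measure.pi (upFac M k a)

lemma upFac_univ_le {N : ℕ} (M : ℕ) {k : ℕ} (h : 0 < k) (a : Fin N → ℤ) (i : Fin N) :
    upFac M k a i univ ≤ ∑' j, ENNReal.ofReal (gw j) := by
  unfold upFac
  split_ifs
  · simpa using one_le_tsum_gw
  · rw [withDensity_apply _ MeasurableSet.univ, Measure.restrict_univ, lintegral_count, tsum_gwk h]

lemma isFiniteMeasure_upFac {N : ℕ} (M : ℕ) {k : ℕ} (h : 0 < k) (a : Fin N → ℤ) (i : Fin N) :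
    IsFiniteMeasure (upFac M k a i) :=
  ⟨(upFac_univ_le M h a i).trans_lt tsum_gw_ne_top.lt_top⟩

lemma upMeas_univ_le {N : ℕ} (M : ℕ) {k : ℕ} (h : 0 < k) (a : Fin N → ℤ) :
    upMeas M k a univ ≤ (∑' j, ENNReal.ofReal (gw j)) ^ N := by
  have := isFiniteMeasure_upFac M h a
  rw [upMeas, Measure.pi_univ]
  refine (Finset.prod_le_prod' fun i _ => upFac_univ_le M h a i).trans ?_
  simp

lemma upMeas_singleton {N : ℕ} (M : ℕ) {k : ℕ} (h : 0 < k) {a v : Fin N → ℤ}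
    (hv : ∀ i : Fin N, (i : ℕ) < M → a i = v i) :
    upMeas M k a {v} = ENNReal.ofReal (∏ i : Fin N, if (i : ℕ) < M then 1 else gwk k (v i)) := by
  have := isFiniteMeasure_upFac M h a
  rw [upMeas, Measure.pi_singleton, ENNReal.ofReal_prod_of_nonneg]
  · refine Finset.prod_congr rfl fun i _ => ?_
    unfold upFac
    split_ifs with hi
    · simp [hv i hi]
    · rw [withDensity_apply _ (measurableSet_singleton _), Measure.restrict_singleton]
      simp
  · intro i _
    split_ifs
    · exact zero_le_one
    · exact (gwk_pos h _).le

/-- The cell of the image under `W` of a corner of the cell `v` of the rotated grid. -/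
noncomputable def rotCell {N : ℕ} (W : Matrix (Fin N) (Fin N) ℝ) (v : Fin N → ℤ) : Fin N → ℤ :=
  fun i => ⌊(W.mulVec fun j => (v j : ℝ)) i⌋

/-- The cells at distance at most `⌈matSum W⌉ + 1` from the origin. -/
noncomputable def nbhd {N : ℕ} (W : Matrix (Fin N) (Fin N) ℝ) : Finset (Fin N → ℤ) :=
  Finset.Icc (fun _ => -(⌈matSum W⌉ + 1)) (fun _ => ⌈matSum W⌉ + 1)

/-- A cell of the rotated grid meets boundedly many cells of the original grid. -/
lemma zq_sub_rotCell_mem {N : ℕ} (W : Matrix (Fin N) (Fin N) ℝ) (k : ℕ) (u : Fin N → ℝ) :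
    zq k (W.mulVec u) - rotCell W (zq k u) ∈ nbhd W := by
  have key : ∀ i, |(k : ℝ) * (W.mulVec u) i - (W.mulVec fun j => ((zq k u j : ℤ) : ℝ)) i|
      ≤ matSum W := by
    intro i
    have h1 : ∀ j, |((k : ℝ) • u - fun j => ((zq k u j : ℤ) : ℝ)) j| ≤ 1 := by
      intro j
      have := Int.floor_le ((k : ℝ) * u j)
      have := Int.lt_floor_add_one ((k : ℝ) * u j)
      simp only [Pi.sub_apply, Pi.smul_apply, smul_eq_mul, zq]
      rw [abs_le]; constructor <;> linarith
    have h2 := abs_mulVec_le W zero_le_one h1 i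
    rwa [Matrix.mulVec_sub, Matrix.mulVec_smul, mul_one] at h2
  have key2 : ∀ i, |(zq k (W.mulVec u) i - rotCell W (zq k u) i : ℤ)| ≤ ⌈matSum W⌉ + 1 := by
    intro i
    have h := abs_le.1 (key i)
    have a1 := Int.floor_le ((k : ℝ) * (W.mulVec u) i)
    have a2 := Int.lt_floor_add_one ((k : ℝ) * (W.mulVec u) i)
    have b1 := Int.floor_le ((W.mulVec fun j => ((zq k u j : ℤ) : ℝ)) i)
    have b2 := Int.lt_floor_add_one ((W.mulVec fun j => ((zq k u j : ℤ) : ℝ)) i)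
    have c := Int.le_ceil (matSum W)
    have : |((zq k (W.mulVec u) i - rotCell W (zq k u) i : ℤ) : ℝ)|
        ≤ ((⌈matSum W⌉ + 1 : ℤ) : ℝ) := by
      rw [abs_le]
      unfold rotCell
      rw [show zq k (W.mulVec u) i = ⌊(k : ℝ) * (W.mulVec u) i⌋ from rfl]
      push_cast
      constructor <;> linarith
    exact_mod_cast this
  rw [nbhd, Finset.mem_Icc]
  exact ⟨fun i => (abs_le.1 (key2 i)).1, fun i => (abs_le.1 (key2 i)).2⟩

/-- A guess for the conditional law of the quantization cell, as a function of the cell `a` of the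
rotated vector, of which only the first `M` coordinates matter. -/
noncomputable def upKer {N : ℕ} (W : Matrix (Fin N) (Fin N) ℝ) (M k : ℕ) (a m : Fin N → ℤ) :
    ENNReal :=
  ∑ d ∈ nbhd W, upMeas M k a (rotCell W ⁻¹' {m - d})

lemma tsum_upKer_le {N : ℕ} (W : Matrix (Fin N) (Fin N) ℝ) (M : ℕ) {k : ℕ} (h : 0 < k)
    (a : Fin N → ℤ) :
    ∑' m, upKer W M k a m ≤ (nbhd W).card * (∑' j, ENNReal.ofReal (gw j)) ^ N := by
  unfold upKer
  rw [Summable.tsum_finsetSum fun _ _ => ENNReal.summable, ← nsmul_eq_mul]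
  refine Finset.sum_le_card_nsmul _ _ _ fun d _ => ?_
  refine le_of_eq_of_le ?_ (upMeas_univ_le M h a)
  calc ∑' m, upMeas M k a (rotCell W ⁻¹' {m - d})
      = ∑' m, upMeas M k a (rotCell W ⁻¹' {m}) :=
        (Equiv.subRight d).tsum_eq fun m => upMeas M k a (rotCell W ⁻¹' {m})
    _ = ∑' m, (upMeas M k a).map (rotCell W) {m} := by
        refine tsum_congr fun m => ?_
        rw [Measure.map_apply (measurable_of_countable _) (measurableSet_singleton _)]
    _ = (upMeas M k a).map (rotCell W) univ := by
        have := lintegral_countable' (μ := (upMeas M k a).map (rotCell W)) (fun _ => 1)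
        simpa using this.symm
    _ = _ := by rw [Measure.map_apply (measurable_of_countable _) MeasurableSet.univ, preimage_univ]

/-- Number of coordinates lost by keeping the first `M` coordinates out of `N`. -/
def nLost (N M : ℕ) : ℕ := Fintype.card {i : Fin N // ¬ (i : ℕ) < M}

lemma neg_log_prod_le {N : ℕ} (M : ℕ) {k : ℕ} (h : 0 < k) (u : Fin N → ℝ) :
    -Real.log (∏ i : Fin N, if (i : ℕ) < M then 1 else gwk k (zq k u i))
      ≤ nLost N M * Real.log k + ∑ i, (|u i| + 1) ^ 2 := by
  have hk' : (0 : ℝ) < k := by exact_mod_cast h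
  rw [Real.log_prod, ← Finset.sum_neg_distrib]
  · have hc : (nLost N M : ℝ) * Real.log k
        = ∑ i : Fin N, if (i : ℕ) < M then 0 else Real.log k := by
      rw [nLost, Fintype.card_subtype, ← nsmul_eq_mul, ← Finset.sum_const, Finset.sum_filter]
      refine Finset.sum_congr rfl fun i _ => ?_
      split_ifs <;> simp_all
    rw [hc, ← Finset.sum_add_distrib]
    refine Finset.sum_le_sum fun i _ => ?_
    split_ifs with hi
    · simp only [Real.log_one, neg_zero, zero_add]; positivity
    · have hfl : (zq k u i) / (k : ℤ) = ⌊u i⌋ := Int.natCast_mul_floor_div_cancel h.ne' _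
      rw [gwk, hfl, Real.log_mul (by positivity) (gw_pos _).ne', gw, Real.log_div one_ne_zero hk'.ne',
        Real.log_div one_ne_zero (by positivity), Real.log_one]
      have h1 := Real.log_le_sub_one_of_pos (show (0 : ℝ) < 1 + (⌊u i⌋ : ℝ) ^ 2 by positivity)
      have h2 : (⌊u i⌋ : ℝ) ^ 2 ≤ (|u i| + 1) ^ 2 := by
        rw [sq_le_sq, abs_of_nonneg (show (0 : ℝ) ≤ |u i| + 1 by positivity), abs_le]
        have := Int.floor_le (u i)
        have := Int.lt_floor_add_one (u i)
        have := neg_abs_le (u i)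
        have := le_abs_self (u i)
        constructor <;> linarith
      linarith
  · intro i _
    split_ifs
    · exact one_ne_zero
    · exact (gwk_pos h _).ne'

lemma measurable_uncurry_comp {α β : Type*} [MeasurableSpace α] [MeasurableSpace β] [Countable α]
    [MeasurableSingletonClass α] (F : α → α → ENNReal) {g : β → α} (hg : Measurable g) :
    Measurable (Function.uncurry fun y m => F (g y) m) := by
  have h1 : Measurable (Function.uncurry F) := measurable_of_countable _
  exact h1.comp ((hg.comp measurable_fst).prodMk measurable_snd)

open Matrix in
/-- Uniform upper bound `(N - M) log k + O(1)` for the conditional entropy. -/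
lemma lintegral_info_le {Ω : Type*} [MeasurableSpace Ω] (P : Measure Ω) [IsProbabilityMeasure P]
    {N : ℕ} (M : ℕ) {W : Matrix (Fin N) (Fin N) ℝ} (hW : Wᵀ * W = 1)
    {U : Ω → Fin N → ℝ} (hU : Measurable U) {k : ℕ} (h : 0 < k) :
    ∫⁻ ω, ENNReal.ofReal (-Real.log (condDistrib (fun ω => zq k (W *ᵥ U ω))
        (fun ω => W *ᵥ tr M (U ω)) P (W *ᵥ tr M (U ω)) {zq k (W *ᵥ U ω)}).toReal) ∂P
      ≤ ENNReal.ofReal (nLost N M * Real.log k)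
        + (∫⁻ ω, ENNReal.ofReal (∑ i, (|U ω i| + 1) ^ 2) ∂P
          + (nbhd W).card * (∑' j, ENNReal.ofReal (gw j)) ^ N) := by
  have hZ : Measurable fun ω => zq k (W *ᵥ U ω) :=
    (measurable_zq k).comp ((measurable_mulVec W).comp hU)
  have hY : Measurable fun ω => W *ᵥ tr M (U ω) :=
    (measurable_mulVec W).comp ((measurable_tr M).comp hU)
  have hq : Measurable (Function.uncurry fun (y : Fin N → ℝ) (m : Fin N → ℤ) =>
      upKer W M k (zq k (Wᵀ *ᵥ y)) m) := by
    exact measurable_uncurry_comp (upKer W M k) ((measurable_zq k).comp (measurable_mulVec Wᵀ))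
  refine (lintegral_neg_log_condDistrib_le P hZ hY hq
    (t := fun ω => ∏ i : Fin N, if (i : ℕ) < M then 1 else gwk k (zq k (U ω) i))
    (fun y => tsum_upKer_le W M h _) (fun ω => ?_) (fun ω => ?_)).trans ?_
  · refine Finset.prod_pos fun i _ => ?_
    split_ifs
    · exact one_pos
    · exact gwk_pos h _
  · rw [mulVec_mulVec, hW, one_mulVec, ← upMeas_singleton M h (a := zq k (tr M (U ω)))]
    · -- the true cell of the rotated vector is one of the terms of `upKer`
      refine le_trans (measure_mono ?_) (Finset.single_le_sum
        (f := fun d => upMeas M k (zq k (tr M (U ω))) (rotCell W ⁻¹' {zq k (W *ᵥ U ω) - d}))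
        (fun _ _ => zero_le) (zq_sub_rotCell_mem W k (U ω)))
      intro v hv
      rw [mem_singleton_iff] at hv
      simp [hv]
    · intro i hi
      simp [zq, tr, hi]
  · rw [← add_assoc]
    gcongr
    calc _ ≤ ∫⁻ ω, (ENNReal.ofReal (nLost N M * Real.log k)
              + ENNReal.ofReal (∑ i, (|U ω i| + 1) ^ 2)) ∂P :=
          lintegral_mono fun ω => (ENNReal.ofReal_le_ofReal (neg_log_prod_le M h (U ω))).trans
            ENNReal.ofReal_add_le
      _ = _ := by rw [lintegral_add_left measurable_const]; simp

/-! ### Lower bound -/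

/-- The standard Gaussian measure on `ℝ^ι`, as a product measure. -/
noncomputable def gaussPi (ι : Type*) [Fintype ι] : Measure (ι → ℝ) :=
  Measure.pi fun _ => gaussianReal 0 1

instance {ι : Type*} [Fintype ι] : IsProbabilityMeasure (gaussPi ι) := by
  unfold gaussPi; infer_instance

lemma volume_ac_gaussPi : ∀ n : ℕ, (volume : Measure (Fin n → ℝ)) ≪ gaussPi (Fin n)
  | 0 => by
    rw [gaussPi, volume_pi, Measure.pi_of_empty, Measure.pi_of_empty]
  | n + 1 => by
    have h1 := (measurePreserving_piFinSuccAbove (α := fun _ : Fin (n + 1) => ℝ)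
      (fun _ => volume) 0).symm.map_eq
    have h2 := (measurePreserving_piFinSuccAbove (α := fun _ : Fin (n + 1) => ℝ)
      (fun _ => gaussianReal 0 1) 0).symm.map_eq
    rw [gaussPi, volume_pi, ← h1, ← h2]
    refine Measure.AbsolutelyContinuous.map ?_ (MeasurableEquiv.measurable _)
    exact (gaussianReal_absolutelyContinuous' 0 one_ne_zero).prod (volume_ac_gaussPi n)

lemma gaussianReal_Icc_le (b r : ℝ) :
    gaussianReal 0 1 (Icc (b - r) (b + r)) ≤ ENNReal.ofReal (2 * r) := by
  rw [gaussianReal_apply 0 one_ne_zero]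
  calc ∫⁻ x in Icc (b - r) (b + r), gaussianPDF 0 1 x
      ≤ ∫⁻ x in Icc (b - r) (b + r), 1 := by
        refine lintegral_mono fun x => ?_
        rw [gaussianPDF, ENNReal.ofReal_le_one, gaussianPDFReal]
        refine mul_le_one₀ ?_ (Real.exp_pos _).le ?_
        · refine inv_le_one_of_one_le₀ ?_
          rw [Real.one_le_sqrt]
          have := Real.pi_gt_three
          simp only [NNReal.coe_one]
          linarith
        · rw [Real.exp_le_one_iff]
          simp only [NNReal.coe_one]
          have := sq_nonneg (x - 0)
          rw [neg_div]
          have : 0 ≤ (x - 0) ^ 2 / (2 * 1) := by positivity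
          linarith
    _ = _ := by
        rw [setLIntegral_one, Real.volume_Icc]
        congr 1
        ring

/-- A set all of whose points are coordinatewise within `r` of each other has small Gaussian
measure. -/
lemma gaussPi_le {ι : Type*} [Fintype ι] (s : Set (ι → ℝ)) (r : ℝ)
    (h : ∀ z ∈ s, ∀ z' ∈ s, ∀ i, |z i - z' i| ≤ r) :
    gaussPi ι s ≤ ENNReal.ofReal (2 * r) ^ Fintype.card ι := by
  rcases s.eq_empty_or_nonempty with rfl | ⟨b, hb⟩
  · simp
  calc gaussPi ι s ≤ gaussPi ι (Set.pi univ fun i => Icc (b i - r) (b i + r)) := by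
        refine measure_mono fun z hz i _ => ?_
        have := abs_le.1 (h z hz b hb i)
        constructor <;> linarith [this.1, this.2]
    _ = ∏ i, gaussianReal 0 1 (Icc (b i - r) (b i + r)) := by rw [gaussPi, Measure.pi_pi]
    _ ≤ ∏ _i : ι, ENNReal.ofReal (2 * r) :=
        Finset.prod_le_prod' fun i _ => gaussianReal_Icc_le _ _
    _ = _ := by simp

open Matrix in
/-- Under the Gaussian measure, the law of the quantization cell given the first `M` rotated
coordinates has atoms `O(k ^ (-(N - M)))`, hence so does the mean of any conditional
subprobability `F` at the true cell. -/
lemma lintegral_gaussPi_le {N : ℕ} (M : ℕ) {W : Matrix (Fin N) (Fin N) ℝ} (hW : Wᵀ * W = 1)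
    {k : ℕ} (hk : 0 < k) {F : (Fin N → ℝ) → (Fin N → ℤ) → ENNReal}
    (hF : Measurable (Function.uncurry F)) (hF1 : ∀ y, ∑' m, F y m ≤ 1) :
    ∫⁻ u, F (W *ᵥ tr M u) (zq k (W *ᵥ u)) ∂(gaussPi (Fin N))
      ≤ ENNReal.ofReal (2 * (matSum Wᵀ / k)) ^ nLost N M := by
  set e := MeasurableEquiv.piEquivPiSubtypeProd (fun _ : Fin N => ℝ) (fun i => (i : ℕ) < M)
  have hmp := (measurePreserving_piEquivPiSubtypeProd (α := fun _ : Fin N => ℝ)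
      (fun _ => gaussianReal 0 1) (fun i => (i : ℕ) < M)).symm
  have hG : Measurable fun u : Fin N → ℝ => F (W *ᵥ tr M u) (zq k (W *ᵥ u)) :=
    hF.comp (((measurable_mulVec W).comp (measurable_tr M)).prodMk
      ((measurable_zq k).comp (measurable_mulVec W)))
  have htr : ∀ a z, tr M (e.symm (a, z)) = tr M (e.symm (a, 0)) := by
    intro a z
    ext i
    unfold tr
    split_ifs with hi
    · simp [e, MeasurableEquiv.piEquivPiSubtypeProd, Equiv.piEquivPiSubtypeProd_symm_apply, hi]
    · rfl
  have hGm : Measurable fun x => F (W *ᵥ tr M (e.symm x)) (zq k (W *ᵥ e.symm x)) :=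
    hG.comp e.symm.measurable
  rw [gaussPi, ← hmp.lintegral_comp hG]
  refine (lintegral_prod _ hGm.aemeasurable).trans_le ?_
  calc _ ≤ ∫⁻ a, ENNReal.ofReal (2 * (matSum Wᵀ / k)) ^ nLost N M
            ∂(gaussPi {i : Fin N // (i : ℕ) < M}) := by
          refine lintegral_mono fun a => ?_
          change ∫⁻ z, F (W *ᵥ tr M (e.symm (a, z))) (zq k (W *ᵥ e.symm (a, z)))
            ∂(gaussPi {i : Fin N // ¬ (i : ℕ) < M}) ≤ _
          have hm : Measurable fun z => zq k (W *ᵥ e.symm (a, z)) :=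
            (measurable_zq k).comp ((measurable_mulVec W).comp
              (e.symm.measurable.comp measurable_prodMk_left))
          simp only [htr a]
          rw [← lintegral_map (f := F (W *ᵥ tr M (e.symm (a, 0)))) (measurable_of_countable _) hm,
            lintegral_countable']
          calc _ ≤ ∑' m, F (W *ᵥ tr M (e.symm (a, 0))) m
                    * ENNReal.ofReal (2 * (matSum Wᵀ / k)) ^ nLost N M := by
                refine ENNReal.tsum_le_tsum fun m => ?_
                gcongr
                rw [Measure.map_apply hm (measurableSet_singleton m)]
                refine gaussPi_le _ _ fun z hz z' hz' i => ?_
                rw [mem_preimage, mem_singleton_iff] at hz hz'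
                have := abs_sub_le_of_zq_eq hW hk (hz.trans hz'.symm) i
                simpa [e, MeasurableEquiv.piEquivPiSubtypeProd,
                  Equiv.piEquivPiSubtypeProd_symm_apply, i.2] using this
            _ ≤ 1 * ENNReal.ofReal (2 * (matSum Wᵀ / k)) ^ nLost N M := by
                rw [ENNReal.tsum_mul_right]
                gcongr
                exact hF1 _
            _ = _ := one_mul _
    _ = _ := by simp

open Matrix in
/-- Outside an event of vanishing probability, the conditional probability of the true cell is
at most `log k / k ^ (N - M)`. -/
lemma tendsto_bad_zero {Ω : Type*} [MeasurableSpace Ω] (P : Measure Ω) [IsProbabilityMeasure P]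
    {N : ℕ} (M : ℕ) {W : Matrix (Fin N) (Fin N) ℝ} (hW : Wᵀ * W = 1)
    {U : Ω → Fin N → ℝ} (hU : Measurable U) (hac : P.map U ≪ volume)
    {F : ℕ → (Fin N → ℝ) → (Fin N → ℤ) → ENNReal}
    (hF : ∀ k, Measurable (Function.uncurry (F k))) (hF1 : ∀ k y, ∑' m, F k y m ≤ 1) :
    Tendsto (fun k : ℕ => P {ω | ENNReal.ofReal (Real.log k / (k : ℝ) ^ nLost N M)
      ≤ F k (W *ᵥ tr M (U ω)) (zq k (W *ᵥ U ω))}) atTop (nhds 0) := by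
  have hG : ∀ k, Measurable fun u : Fin N → ℝ => F k (W *ᵥ tr M u) (zq k (W *ᵥ u)) := fun k =>
    (hF k).comp (((measurable_mulVec W).comp (measurable_tr M)).prodMk
      ((measurable_zq k).comp (measurable_mulVec W)))
  set T : ℕ → Set (Fin N → ℝ) := fun k => {u | ENNReal.ofReal (Real.log k / (k : ℝ) ^ nLost N M)
      ≤ F k (W *ᵥ tr M u) (zq k (W *ᵥ u))} with hT
  have hTm : ∀ k, MeasurableSet (T k) := fun k => measurableSet_le measurable_const (hG k)
  have hlog : Tendsto (fun k : ℕ => Real.log k) atTop atTop :=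
    Real.tendsto_log_atTop.comp tendsto_natCast_atTop_atTop
  have h1 : Tendsto (fun k => gaussPi (Fin N) (T k)) atTop (nhds 0) := by
    have hb : Tendsto (fun k : ℕ => ENNReal.ofReal ((2 * matSum Wᵀ) ^ nLost N M / Real.log k))
        atTop (nhds 0) := by
      rw [← ENNReal.ofReal_zero]
      exact ENNReal.tendsto_ofReal (hlog.const_div_atTop _)
    refine tendsto_of_tendsto_of_tendsto_of_le_of_le' tendsto_const_nhds hb
      (Eventually.of_forall fun _ => zero_le) ?_
    filter_upwards [eventually_gt_atTop 0, hlog.eventually_gt_atTop 0] with k hk hl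
    have hk' : (0 : ℝ) < k := by exact_mod_cast hk
    have hpos : 0 < Real.log k / (k : ℝ) ^ nLost N M := by positivity
    have hA := matSum_nonneg Wᵀ
    refine (meas_ge_le_lintegral_div (hG k).aemeasurable (by simpa using hpos)
      ENNReal.ofReal_ne_top).trans ?_
    refine (ENNReal.div_le_div_right (lintegral_gaussPi_le M hW hk (hF k) (hF1 k)) _).trans ?_
    rw [← ENNReal.ofReal_pow (by positivity), ← ENNReal.ofReal_div_of_pos hpos]
    refine ENNReal.ofReal_le_ofReal (le_of_eq ?_)
    rw [← mul_div_assoc, div_pow]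
    field_simp
  have h2 : P.map U ≪ gaussPi (Fin N) := hac.trans (volume_ac_gaussPi N)
  have hUp : IsProbabilityMeasure (P.map U) := Measure.isProbabilityMeasure_map hU.aemeasurable
  have h3 := tendsto_setLIntegral_zero (μ := gaussPi (Fin N))
    (f := (P.map U).rnDeriv (gaussPi (Fin N))) (Measure.lintegral_rnDeriv_lt_top _ _).ne h1
  refine h3.congr fun k => ?_
  rw [Measure.setLIntegral_rnDeriv h2, Measure.map_apply hU (hTm k)]
  rfl

/-! ### Asymptotics -/

open Matrix in
/-- `H(⌊kX⌋ | Y) ∼ (N - M) log k`, where `X = W U` and `Y` keeps the first `M` coordinates of `U`. -/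
lemma tendsto_condEnt_div_log {Ω : Type*} [MeasurableSpace Ω] (P : Measure Ω)
    [IsProbabilityMeasure P] {N : ℕ} (M : ℕ) {W : Matrix (Fin N) (Fin N) ℝ} (hW : Wᵀ * W = 1)
    {U : Ω → Fin N → ℝ} (hU : Measurable U) (hac : P.map U ≪ volume)
    (hsq : ∀ i, Integrable (fun ω => (|U ω i| + 1) ^ 2) P) :
    Tendsto (fun k : ℕ => condEnt P (fun ω i => qz k ((W *ᵥ U ω) i))
      (fun ω => W *ᵥ tr M (U ω)) / Real.log k) atTop (nhds (nLost N M)) := by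
  have hlog : Tendsto (fun k : ℕ => Real.log k) atTop atTop :=
    Real.tendsto_log_atTop.comp tendsto_natCast_atTop_atTop
  have hZ : ∀ k, Measurable fun ω => zq k (W *ᵥ U ω) := fun k =>
    (measurable_zq k).comp ((measurable_mulVec W).comp hU)
  have hY : Measurable fun ω => W *ᵥ tr M (U ω) :=
    (measurable_mulVec W).comp ((measurable_tr M).comp hU)
  set κ : ℕ → Kernel (Fin N → ℝ) (Fin N → ℤ) := fun k =>
    condDistrib (fun ω => zq k (W *ᵥ U ω)) (fun ω => W *ᵥ tr M (U ω)) P with hκ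
  have hκp : ∀ k, IsMarkovKernel (κ k) := fun k => by rw [hκ]; infer_instance
  set p : ℕ → Ω → ENNReal := fun k ω => κ k (W *ᵥ tr M (U ω)) {zq k (W *ᵥ U ω)} with hp
  have hpm : ∀ k, Measurable (p k) := fun k =>
    (measurable_condDistrib_singleton P (fun ω => zq k (W *ᵥ U ω))
      (fun ω => W *ᵥ tr M (U ω))).comp (hY.prodMk (hZ k))
  set L : ℕ → ENNReal := fun k => ∫⁻ ω, ENNReal.ofReal (-Real.log (p k ω).toReal) ∂P with hL
  obtain ⟨C, hC⟩ : ∃ C : NNReal, ∀ k : ℕ, 0 < k →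
      L k ≤ ENNReal.ofReal (nLost N M * Real.log k) + C := by
    have hfin : ∫⁻ ω, ENNReal.ofReal (∑ i, (|U ω i| + 1) ^ 2) ∂P
          + (nbhd W).card * (∑' j, ENNReal.ofReal (gw j)) ^ N ≠ ⊤ := by
      refine ENNReal.add_ne_top.2 ⟨?_, ENNReal.mul_ne_top (ENNReal.natCast_ne_top _)
        (ENNReal.pow_ne_top tsum_gw_ne_top)⟩
      exact (integrable_finsetSum _ fun i _ => hsq i).lintegral_lt_top.ne
    obtain ⟨C, hC⟩ := WithTop.ne_top_iff_exists.1 hfin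
    refine ⟨C, fun k hk => ?_⟩
    rw [show (C : ENNReal) = _ from hC]
    exact lintegral_info_le P M hW hU hk
  have hLtop : ∀ k : ℕ, 0 < k → L k ≠ ⊤ := fun k hk =>
    ((hC k hk).trans_lt (by finiteness)).ne
  have hE : ∀ k : ℕ, 0 < k → condEnt P (fun ω i => qz k ((W *ᵥ U ω) i))
      (fun ω => W *ᵥ tr M (U ω)) = (L k).toReal := by
    intro k hk
    rw [← condEnt_eq_lintegral P (hZ k) hY (hLtop k hk)]
    have hk' : (k : ℝ) ≠ 0 := by exact_mod_cast hk.ne'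
    refine condEnt_comp_injective P (hZ k) _ (e := fun (m : Fin N → ℤ) i => (m i : ℝ) / k) ?_
      (measurable_of_countable _)
    intro m m' h
    ext i
    have := congrFun h i
    simp only [div_left_inj' hk'] at this
    exact_mod_cast this
  set B : ℕ → Set Ω := fun k =>
    {ω | ENNReal.ofReal (Real.log k / (k : ℝ) ^ nLost N M) ≤ p k ω} with hB
  have hBm : ∀ k, MeasurableSet (B k) := fun k => measurableSet_le measurable_const (hpm k)
  have hB0 : Tendsto (fun k => P (B k)) atTop (nhds 0) := by
    refine tendsto_bad_zero P M hW hU hac (F := fun k y m => κ k y {m})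
      (fun k => measurable_condDistrib_singleton P _ _) fun k y => ?_
    have := lintegral_countable' (μ := κ k y) (fun _ => 1)
    simp only [lintegral_const, measure_univ, one_mul, mul_one] at this
    exact this.symm.le
  have hlow : ∀ k : ℕ, 1 < k → 0 < Real.log k →
      (1 - P.real (B k)) * (nLost N M * Real.log k - Real.log (Real.log k)) ≤ (L k).toReal := by
    intro k hk hl
    have hk' : (0 : ℝ) < k := by exact_mod_cast (zero_lt_one.trans hk)
    rw [← probReal_compl_eq_one_sub (hBm k)]
    have h1 : ENNReal.ofReal (nLost N M * Real.log k - Real.log (Real.log k)) * P (B k)ᶜ ≤ L k := by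
      rw [← setLIntegral_const]
      refine le_trans ?_ (setLIntegral_le_lintegral (B k)ᶜ _)
      refine setLIntegral_mono_ae' (hBm k).compl ?_
      filter_upwards [ae_condDistrib_singleton_ne_zero P (hZ k) hY] with ω hω hωB
      have hpt : p k ω ≠ ⊤ := measure_ne_top _ _
      have hlt : p k ω < ENNReal.ofReal (Real.log k / (k : ℝ) ^ nLost N M) := not_le.1 hωB
      have hpos : 0 < (p k ω).toReal := ENNReal.toReal_pos hω hpt
      have hle : (p k ω).toReal ≤ Real.log k / (k : ℝ) ^ nLost N M :=
        ENNReal.toReal_le_of_le_ofReal (by positivity) hlt.le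
      have := Real.log_le_log hpos hle
      rw [Real.log_div hl.ne' (by positivity), Real.log_pow] at this
      exact ENNReal.ofReal_le_ofReal (by linarith)
    rcases le_or_gt (nLost N M * Real.log k - Real.log (Real.log k)) 0 with hn | hn
    · exact (mul_nonpos_of_nonneg_of_nonpos measureReal_nonneg hn).trans ENNReal.toReal_nonneg
    · have := ENNReal.toReal_mono (hLtop k (zero_lt_one.trans hk)) h1
      rwa [ENNReal.toReal_mul, ENNReal.toReal_ofReal hn.le, mul_comm] at this
  have hll : Tendsto (fun k : ℕ => Real.log (Real.log k) / Real.log k) atTop (nhds 0) :=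
    (Real.isLittleO_log_id_atTop.tendsto_div_nhds_zero).comp hlog
  have hBr : Tendsto (fun k => P.real (B k)) atTop (nhds 0) := by
    exact (ENNReal.tendsto_toReal ENNReal.zero_ne_top).comp hB0
  have hg : Tendsto (fun k : ℕ => (1 - P.real (B k))
      * (nLost N M - Real.log (Real.log k) / Real.log k)) atTop (nhds (nLost N M)) := by
    simpa using (hBr.const_sub 1).mul (hll.const_sub (nLost N M : ℝ))
  have hh : Tendsto (fun k : ℕ => (nLost N M : ℝ) + C / Real.log k) atTop (nhds (nLost N M)) := by
    simpa using (hlog.const_div_atTop (C : ℝ)).const_add (nLost N M : ℝ)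
  refine tendsto_of_tendsto_of_tendsto_of_le_of_le' hg hh ?_ ?_
  · filter_upwards [eventually_gt_atTop 1, hlog.eventually_gt_atTop 0] with k hk hl
    rw [hE k (zero_lt_one.trans hk), le_div_iff₀ hl]
    refine le_trans (le_of_eq ?_) (hlow k hk hl)
    field_simp
  · filter_upwards [eventually_gt_atTop 0, hlog.eventually_gt_atTop 0] with k hk hl
    rw [hE k hk, div_le_iff₀ hl]
    have := ENNReal.toReal_mono (by finiteness) (hC k hk)
    rw [ENNReal.toReal_add (by finiteness) (by finiteness),
      ENNReal.toReal_ofReal (by positivity), ENNReal.coe_toReal] at this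
    refine this.trans (le_of_eq ?_)
    field_simp

lemma nLost_add {N M : ℕ} (h : M ≤ N) : (nLost N M : ℝ) = N - M := by
  have h1 : nLost N M = N - M := by
    rw [nLost, Fintype.card_subtype_compl, Fintype.card_fin]
    congr 1
    rw [Fintype.card_subtype]
    rw [Fin.card_filter_val_lt, min_eq_right h]
  rw [h1, Nat.cast_sub h]

open Matrix in
lemma projection_mulVec {N M : ℕ} (hMN : M ≤ N) (IM : Matrix (Fin M) (Fin N) ℝ)
    (hIM : ∀ (i : Fin M) (j : Fin N), IM i j = if (i : ℕ) = (j : ℕ) then 1 else 0)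
    (u : Fin N → ℝ) : (IMᵀ * IM) *ᵥ u = tr M u := by
  rw [← mulVec_mulVec]
  have h1 : ∀ i : Fin M, (IM *ᵥ u) i = u (Fin.castLE hMN i) := by
    intro i
    simp only [mulVec, dotProduct, hIM, ite_mul, one_mul, zero_mul]
    rw [Finset.sum_eq_single (Fin.castLE hMN i)]
    · simp
    · intro j _ hj
      rw [if_neg]
      intro h
      exact hj (Fin.ext h.symm)
    · simp
  ext j
  rw [mulVec, dotProduct]
  simp only [h1, transpose_apply, hIM, ite_mul, one_mul, zero_mul, tr]
  split_ifs with hj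
  · rw [Finset.sum_eq_single ⟨j, hj⟩]
    · simp
    · intro i _ hi
      rw [if_neg]
      intro h
      exact hi (Fin.ext h)
    · simp
  · refine Finset.sum_eq_zero fun i _ => if_neg ?_
    have := i.2
    omega

open Matrix in
/-- Let `X` be an `N`-dimensional random vector with `P_X ≪ λ^N`, zero mean
and positive definite covariance matrix `C_X = W Σ Wᵀ` (eigenvalue decomposition with
orthogonal `W`).  For the PCA reconstruction `X̃_M = W I_Mᵀ I_M Wᵀ X` from the first `M < N`
principal components (`I_M` the `M×N` rectangular identity matrix), the relative information
loss is `l(X→X̃_M) = (N−M)/N`. -/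
theorem relative_loss_PCA_reconstruction
    {Ω : Type*} [MeasurableSpace Ω] (P : Measure Ω) [IsProbabilityMeasure P]
    {N M : ℕ} (hMN : M < N)
    (X : Ω → (Fin N → ℝ)) (hX : Measurable X)
    (hac : P.map X ≪ volume)
    (hmean : ∀ i, ∫ ω, X ω i ∂P = 0)
    (C : Matrix (Fin N) (Fin N) ℝ)
    (hC : ∀ i j, C i j = ∫ ω, X ω i * X ω j ∂P)
    (hCpos : C.PosDef)
    (W S : Matrix (Fin N) (Fin N) ℝ)
    (hW : W * Wᵀ = 1) (hS : S.IsDiag) (hEVD : C = W * S * Wᵀ)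
    (IM : Matrix (Fin M) (Fin N) ℝ)
    (hIM : ∀ (i : Fin M) (j : Fin N), IM i j = if (i : ℕ) = (j : ℕ) then 1 else 0) :
    Tendsto (fun k : ℕ =>
        condEnt P (fun ω i => qz k (X ω i))
            (fun ω => Matrix.mulVec (W * IMᵀ * IM * Wᵀ) (X ω)) /
          mEnt (P.map (fun ω i => qz k (X ω i)))) atTop
      (nhds (((N : ℝ) - M) / N)) := by
  have hW' : Wᵀ * W = 1 := mul_eq_one_comm.1 hW
  set U : Ω → Fin N → ℝ := fun ω => Wᵀ *ᵥ X ω with hUdef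
  have hU : Measurable U := (measurable_mulVec Wᵀ).comp hX
  have hXU : ∀ ω, W *ᵥ U ω = X ω := fun ω => by
    rw [hUdef, mulVec_mulVec, hW, one_mulVec]
  have hdet : Wᵀ.det ≠ 0 := by
    intro h0
    have := congrArg Matrix.det hW'
    simp [h0] at this
  have hacU : P.map U ≪ volume := by
    have h1 : P.map U = (P.map X).map (fun x => Wᵀ *ᵥ x) :=
      (Measure.map_map (measurable_mulVec Wᵀ) hX).symm
    have h2 := Real.map_matrix_volume_pi_eq_smul_volume_pi hdet
    rw [h1]
    refine (hac.map (measurable_mulVec Wᵀ)).trans ?_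
    change Measure.map (toLin' Wᵀ) volume ≪ volume
    rw [h2]
    exact Measure.smul_absolutelyContinuous
  -- a positive diagonal entry of `C` forces the second moment to be finite
  have hX2 : ∀ i, MemLp (fun ω => X ω i) 2 P := by
    intro i
    have hpos : 0 < C i i := hCpos.diag_pos
    have hint : Integrable (fun ω => X ω i * X ω i) P := by
      by_contra hn
      rw [hC, integral_undef hn] at hpos
      exact lt_irrefl _ hpos
    have hm : Measurable fun ω => X ω i := (measurable_pi_apply i).comp hX
    rw [memLp_two_iff_integrable_sq hm.aestronglyMeasurable]
    simpa [sq] using hint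
  have hU2 : ∀ i, Integrable (fun ω => (|U ω i| + 1) ^ 2) P := by
    intro i
    have h1 : MemLp (fun ω => U ω i) 2 P := by
      have := memLp_finsetSum Finset.univ (fun j _ => (hX2 j).const_mul (Wᵀ i j))
      exact this
    exact (h1.abs.add (memLp_const 1)).integrable_sq
  have hN : (N : ℝ) ≠ 0 := by
    have : 0 < N := by omega
    exact_mod_cast this.ne'
  have hnum := tendsto_condEnt_div_log P M hW' hU hacU hU2
  have hden := tendsto_condEnt_div_log P 0 hW' hU hacU hU2
  rw [nLost_add hMN.le] at hnum
  rw [nLost_add (Nat.zero_le N), Nat.cast_zero, sub_zero] at hden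
  have hY : ∀ ω, W *ᵥ tr M (U ω) = (W * IMᵀ * IM * Wᵀ) *ᵥ X ω := by
    intro ω
    rw [← projection_mulVec hMN.le IM hIM, hUdef, mulVec_mulVec, mulVec_mulVec]
    simp only [Matrix.mul_assoc]
  -- keeping no coordinate at all turns the conditional entropy into the entropy
  have hY0 : ∀ ω, W *ᵥ tr 0 (U ω) = 0 := by
    intro ω
    have : tr 0 (U ω) = 0 := by ext i; simp [tr]
    rw [this, mulVec_zero]
  simp only [hXU, hY] at hnum
  simp only [hXU, hY0] at hden
  have hqm : ∀ k, Measurable fun ω i => qz k (X ω i) := by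
    intro k
    refine measurable_pi_lambda _ fun i => ?_
    have h1 : Measurable fun ω => ⌊(k : ℝ) * X ω i⌋ :=
      Int.measurable_floor.comp (((measurable_pi_apply i).comp hX).const_mul _)
    exact ((measurable_of_countable (fun n : ℤ => (n : ℝ))).comp h1).div_const _
  simp only [condEnt_const P (hqm _)] at hden
  refine (hnum.div hden hN).congr' ?_
  have hlog : Tendsto (fun k : ℕ => Real.log k) atTop atTop :=
    Real.tendsto_log_atTop.comp tendsto_natCast_atTop_atTop
  filter_upwards [hlog.eventually_gt_atTop 0] with k hl
  exact div_div_div_cancel_right₀ hl.ne' _ _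
end

section
/- Let X = (X₁, X₂) be a two-dimensional zero-mean Gaussian random vector with positive definite covariance, and consider PCA with a single sample (n = 1), i.e., sample covariance matrix Ĉ = X Xᵀ. Then Ĉ has eigenvalues ‖X‖² and 0, the PCA output is Y = ŴᵀX = [sgn(X₂)·‖X‖, 0]ᵀ (where Ŵ has columns the normalized eigenvectors [sgn(X₂)X₁/‖X‖, |X₂|/‖X‖]ᵀ and [−sgn(X₁)X₂/‖X‖, |X₁|/‖X‖]ᵀ), and the relative information loss is l(X→Y) = 1/2. -/
/-!
The PCA output is almost surely the signed norm `sgn(X₂)‖X‖`, i.e. the function `radial` of `X`, so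
the loss of information is that of the angle within a half circle.

Write `r` for the norm. The Gaussian density lies between `c exp(-b r²)` and `c exp(-a r²)`
(`gaussLike_gaussDensity`). Every cell of the grid of mesh `1/k` therefore has probability at most
`c/k²`, and at least `c/k²` times a factor whose logarithm is quadratic in the grid point; finite
second moments give `H(X̂ₖ) = 2 log k + O(1)` (`entropy_quant`).

Given the output, `X` lives on a half circle of radius `r`. In polar coordinates, a cell captures
conditional probability at most `exp(b r²)/(k r)` (`lintegral_cell_le`, resting on the comparison of
chord and arc in `volume_arc_le`), while the circle meets only `O(k r + 1)` cells
(`annulus_count`). Hence the conditional entropy of `X̂ₖ` is `log k` up to an error bounded by a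
multiple of `1 + 1/r + r²` (`condEntropy_pointwise`), which is integrable and independent of `k`,
so `H(X̂ₖ | Y) = log k + O(1)` (`condEntropy_quant`). The ratio tends to `1/2`.
-/

open MeasureTheory ProbabilityTheory Filter Real Set

open Matrix in
/-- Density (w.r.t. Lebesgue measure) of the `N`-dimensional zero-mean Gaussian distribution
with positive definite covariance matrix `C`. -/
noncomputable def gaussDensity {N : ℕ} (C : Matrix (Fin N) (Fin N) ℝ) (x : Fin N → ℝ) : ℝ :=
  (2 * Real.pi) ^ (-(N : ℝ) / 2) * C.det ^ (-(1 : ℝ) / 2) *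
    Real.exp (-(1 / 2) * (x ⬝ᵥ C⁻¹.mulVec x))

/-- Euclidean norm on `ℝ²`. -/
noncomputable def nrm2 (x : Fin 2 → ℝ) : ℝ := Real.sqrt (x 0 ^ 2 + x 1 ^ 2)

/-- Sample covariance matrix `x xᵀ` of a single two-dimensional sample. -/
def sampCov (x : Fin 2 → ℝ) : Matrix (Fin 2) (Fin 2) ℝ :=
  Matrix.of (fun i j => x i * x j)

/-- The orthogonal matrix `Ŵ` of the PCA for a single two-dimensional sample: its columns are
the normalized eigenvectors `[sgn(x₂)x₁/‖x‖, |x₂|/‖x‖]ᵀ` and `[−sgn(x₁)x₂/‖x‖, |x₁|/‖x‖]ᵀ`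
of `x xᵀ`. -/
noncomputable def hatW (x : Fin 2 → ℝ) : Matrix (Fin 2) (Fin 2) ℝ :=
  Matrix.of ![![Real.sign (x 1) * x 0 / nrm2 x, -(Real.sign (x 0) * x 1) / nrm2 x],
              ![|x 1| / nrm2 x, |x 0| / nrm2 x]]

/-! ### Entropy of discrete distributions -/

lemma entropy_le_log_card {ι : Type*} (p : ι → ℝ) (hp : ∀ i, 0 ≤ p i) (S : Finset ι)
    (hS : ∑ i ∈ S, p i = 1) (N : ℝ) (hN : 0 < N) (hSN : (S.card : ℝ) ≤ N) :
    ∑ i ∈ S, negMulLog (p i) ≤ log N := by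
  -- `log t ≤ t - 1` at `t = 1 / (p i * N)`
  have h : ∀ i ∈ S, negMulLog (p i) ≤ p i * log N + (1 / N - p i) := by
    intro i _
    rcases (hp i).eq_or_lt with h0 | h0
    · rw [← h0]; simp; positivity
    · have h1 := Real.one_sub_inv_le_log_of_pos (mul_pos h0 hN)
      rw [Real.log_mul h0.ne' hN.ne'] at h1
      have h2 := mul_le_mul_of_nonneg_left h1 h0.le
      have h3 : p i * (1 - (p i * N)⁻¹) = p i - 1 / N := by field_simp
      rw [h3] at h2
      simp only [negMulLog]
      linarith
  calc ∑ i ∈ S, negMulLog (p i) ≤ ∑ i ∈ S, (p i * log N + (1 / N - p i)) := Finset.sum_le_sum h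
    _ = log N + (S.card / N - 1) := by
      rw [Finset.sum_add_distrib, Finset.sum_sub_distrib, ← Finset.sum_mul, hS]
      simp [div_eq_mul_inv]
    _ ≤ log N := by
      have : (S.card : ℝ) / N ≤ 1 := by rw [div_le_one hN]; exact hSN
      linarith

lemma neg_log_le_entropy {ι : Type*} (p : ι → ℝ) (hp : ∀ i, 0 ≤ p i) (hs : HasSum p 1)
    (B : ℝ) (hpB : ∀ i, p i ≤ B) (hsum : Summable fun i => negMulLog (p i)) :
    - log B ≤ ∑' i, negMulLog (p i) := by
  have h1 : HasSum (fun i => p i * (- log B)) (1 * (- log B)) := hs.mul_right _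
  rw [one_mul] at h1
  refine hasSum_le (fun i => ?_) h1 hsum.hasSum
  rcases (hp i).eq_or_lt with h0 | h0
  · rw [← h0]; simp
  · have := Real.log_le_log h0 (hpB i)
    have := mul_le_mul_of_nonneg_left this h0.le
    simp only [negMulLog]
    linarith

/-- Bounding `-log p` by a weight `w` bounds the entropy by the mean of `w`; here the entropy sum
may be infinite, so its summability is part of the conclusion. -/
lemma entropy_le_of_exp_neg_le {ι : Type*} (p w : ι → ℝ) (hp : ∀ i, 0 ≤ p i) (hs : HasSum p 1)
    (hw : ∀ i, rexp (- w i) ≤ p i) (hsum : Summable fun i => p i * w i) :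
    (Summable fun i => negMulLog (p i)) ∧ ∑' i, negMulLog (p i) ≤ ∑' i, p i * w i := by
  have hle : ∀ i, negMulLog (p i) ≤ p i * w i := by
    intro i
    have h0 : 0 < p i := (Real.exp_pos _).trans_le (hw i)
    have h1 := (Real.le_log_iff_exp_le h0).2 (hw i)
    have := mul_le_mul_of_nonneg_left h1 h0.le
    simp only [negMulLog]
    linarith
  have hnn : ∀ i, 0 ≤ negMulLog (p i) := fun i =>
    negMulLog_nonneg (hp i) (le_hasSum hs i fun j _ => hp j)
  have hS : Summable fun i => negMulLog (p i) := Summable.of_nonneg_of_le hnn hle hsum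
  exact ⟨hS, hS.tsum_le_tsum hle hsum⟩

/-- The grid point with index `z` of the lattice `(ℤ / k)²` in which the quantizer takes its
values. -/
noncomputable def gridPt (k : ℕ) (z : ℤ × ℤ) : Fin 2 → ℝ := ![(z.1 : ℝ) / k, (z.2 : ℝ) / k]

lemma gridPt_injective {k : ℕ} (hk : 0 < k) : Function.Injective (gridPt k) := by
  intro z w h
  have hk' : (k : ℝ) ≠ 0 := by positivity
  have h0 := congrFun h 0
  have h1 := congrFun h 1
  simp only [gridPt, Matrix.cons_val_zero, Matrix.cons_val_one] at h0 h1
  rw [div_left_inj' hk'] at h0 h1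
  exact Prod.ext (by exact_mod_cast h0) (by exact_mod_cast h1)

lemma grid_hasSum {k : ℕ} (hk : 0 < k) (ν : Measure (Fin 2 → ℝ)) [IsProbabilityMeasure ν]
    (hν : ν (range (gridPt k))ᶜ = 0) :
    HasSum (fun z => (ν {gridPt k z}).toReal) 1 := by
  have h1 : ν (range (gridPt k)) = ∑' z, ν {gridPt k z} := by
    have : range (gridPt k) = ⋃ z, {gridPt k z} := by ext; simp [eq_comm]
    rw [this, measure_iUnion]
    · intro z w hzw
      simpa using fun h => hzw (gridPt_injective hk h.symm).symm
    · intro z; exact measurableSet_singleton _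
  have h2 : ν (range (gridPt k)) = 1 := by
    rwa [prob_compl_eq_zero_iff (countable_range _).measurableSet] at hν
  have h3 := ENNReal.hasSum_toReal (f := fun z => ν {gridPt k z}) (by rw [← h1, h2]; simp)
  rwa [← ENNReal.tsum_toReal_eq (fun z => measure_ne_top _ _), ← h1, h2, ENNReal.toReal_one] at h3

/-- For a measure carried by the grid, the sum over the whole plane in `mEnt` reduces to a countable
one. -/
lemma grid_mEnt {k : ℕ} (hk : 0 < k) (ν : Measure (Fin 2 → ℝ))
    (hν : ν (range (gridPt k))ᶜ = 0) :
    mEnt ν = ∑' z, negMulLog (ν {gridPt k z}).toReal := by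
  unfold mEnt
  rw [(gridPt_injective hk).tsum_eq (f := fun a => negMulLog (ν {a}).toReal)]
  intro a ha
  by_contra h
  have : ν {a} = 0 := measure_mono_null (by simpa using h) hν
  simp [this] at ha
/-! ### Planar geometry: cells, circles and polar coordinates -/

/-- The quantizer applied to a point of the plane. -/
noncomputable def quant (k : ℕ) (x : Fin 2 → ℝ) : Fin 2 → ℝ := fun i => qz k (x i)

lemma quant_eq (k : ℕ) (x : Fin 2 → ℝ) :
    quant k x = gridPt k (⌊(k : ℝ) * x 0⌋, ⌊(k : ℝ) * x 1⌋) := by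
  ext i; fin_cases i <;> simp [quant, gridPt, qz]

lemma quant_eq_gridPt {k : ℕ} (hk : 0 < k) (x : Fin 2 → ℝ) (z : ℤ × ℤ) :
    quant k x = gridPt k z ↔ ((z.1 : ℝ) / k ≤ x 0 ∧ x 0 < (z.1 + 1) / k) ∧
      ((z.2 : ℝ) / k ≤ x 1 ∧ x 1 < (z.2 + 1) / k) := by
  have hk' : (0 : ℝ) < k := by positivity
  rw [quant_eq, (gridPt_injective hk).eq_iff, Prod.ext_iff]
  simp only [Int.floor_eq_iff, div_le_iff₀ hk', lt_div_iff₀ hk', mul_comm (k : ℝ)]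

lemma measurable_quant (k : ℕ) : Measurable (quant k) := by
  unfold quant qz
  fun_prop

lemma nrm2_eq_norm (x : Fin 2 → ℝ) : nrm2 x = ‖(x 0 : ℂ) + x 1 * Complex.I‖ := by
  rw [Complex.norm_add_mul_I]; rfl

lemma nrm2_nonneg (x : Fin 2 → ℝ) : 0 ≤ nrm2 x := Real.sqrt_nonneg _

lemma nrm2_sq (x : Fin 2 → ℝ) : nrm2 x ^ 2 = x 0 ^ 2 + x 1 ^ 2 :=
  Real.sq_sqrt (by positivity)

lemma measurable_nrm2 : Measurable nrm2 := by
  unfold nrm2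
  fun_prop

lemma nrm2_polar {r : ℝ} (hr : 0 ≤ r) (θ : ℝ) : nrm2 ![r * cos θ, r * sin θ] = r := by
  simp only [nrm2, Matrix.cons_val_zero, Matrix.cons_val_one]
  rw [show (r * cos θ) ^ 2 + (r * sin θ) ^ 2 = r ^ 2 by
    linear_combination r ^ 2 * Real.sin_sq_add_cos_sq θ]
  exact Real.sqrt_sq hr

/-- An annulus of bounded width around the circle of radius `R` contains `O(R + 1)` lattice
points: cut the circle into arcs of length one, and note that a lattice point of the annulus is
within distance three of the starting point of some arc. -/
lemma annulus_count {R : ℝ} (hR : 0 < R) : ∃ S : Finset (ℤ × ℤ),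
    (∀ z : ℤ × ℤ, |‖(z.1 : ℂ) + z.2 * Complex.I‖ - R| ≤ 2 → z ∈ S) ∧
      (S.card : ℝ) ≤ 81 * (2 * π * R + 2) := by
  classical
  let f : ℤ × ℤ × ℤ → ℤ × ℤ := fun t =>
    (⌊R * cos (t.1 / R)⌋ + t.2.1, ⌊R * sin (t.1 / R)⌋ + t.2.2)
  refine ⟨((Finset.Icc ⌊-(π * R)⌋ ⌊π * R⌋) ×ˢ (Finset.Icc (-4) 4) ×ˢ (Finset.Icc (-4) 4)).image f,
    ?_, ?_⟩
  · intro z hz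
    set w : ℂ := (z.1 : ℂ) + z.2 * Complex.I with hw
    set θ := Complex.arg w
    have hc : ‖w‖ * cos θ = z.1 := by rw [Complex.norm_mul_cos_arg]; simp [hw]
    have hs : ‖w‖ * sin θ = z.2 := by rw [Complex.norm_mul_sin_arg]; simp [hw]
    set a : ℤ := ⌊R * θ⌋ with ha
    have ha1 : (a : ℝ) ≤ R * θ := Int.floor_le _
    have ha2 : R * θ < a + 1 := Int.lt_floor_add_one _
    have hd : R * |θ - a / R| ≤ 1 := by
      rw [← abs_of_pos hR, ← abs_mul, abs_of_pos hR, abs_le]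
      have : R * (θ - a / R) = R * θ - a := by field_simp
      rw [this]; constructor <;> linarith
    have key : ∀ (u v n : ℝ) (m : ℤ), |u| ≤ 1 → |u - v| ≤ |θ - a / R| → ‖w‖ * u = m →
        m - ⌊R * v⌋ ∈ Finset.Icc (-4 : ℤ) 4 := by
      intro u v n m hu huv hm
      have h1 : |(‖w‖ - R) * u| ≤ 2 := by
        rw [abs_mul]
        calc _ ≤ 2 * 1 := mul_le_mul hz hu (abs_nonneg _) (by norm_num)
          _ = 2 := by norm_num
      have h2 : |R * (u - v)| ≤ 1 := by
        rw [abs_mul, abs_of_pos hR]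
        exact (mul_le_mul_of_nonneg_left huv hR.le).trans hd
      have h3 := Int.floor_le (R * v)
      have h4 := Int.lt_floor_add_one (R * v)
      rw [abs_le] at h1 h2
      have h5 : (-4 : ℝ) ≤ (m - ⌊R * v⌋ : ℝ) := by nlinarith
      have h6 : (m - ⌊R * v⌋ : ℝ) ≤ 4 := by nlinarith
      rw [Finset.mem_Icc]
      exact ⟨by exact_mod_cast h5, by exact_mod_cast h6⟩
    rw [Finset.mem_image]
    refine ⟨(a, z.1 - ⌊R * cos (a / R)⌋, z.2 - ⌊R * sin (a / R)⌋), ?_, ?_⟩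
    · simp only [Finset.mem_product]
      refine ⟨?_, key (cos θ) (cos (a / R)) 0 z.1 (Real.abs_cos_le_one _) ?_ hc,
        key (sin θ) (sin (a / R)) 0 z.2 (Real.abs_sin_le_one _) ?_ hs⟩
      · rw [Finset.mem_Icc]
        constructor
        · apply Int.floor_le_floor
          nlinarith [Complex.neg_pi_lt_arg w]
        · apply Int.floor_le_floor
          nlinarith [Complex.arg_le_pi w]
      · exact Real.abs_cos_sub_cos_le _ _
      · exact Real.abs_sin_sub_sin_le _ _
    · simp [f]
  · refine (Nat.cast_le.2 Finset.card_image_le).trans ?_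
    rw [Finset.card_product, Finset.card_product]
    simp only [Int.card_Icc]
    have h1 := Int.floor_le (π * R)
    have h2 := Int.lt_floor_add_one (-(π * R))
    have h0 : 0 ≤ ⌊π * R⌋ + 1 - ⌊-(π * R)⌋ := by
      have : ⌊-(π * R)⌋ ≤ ⌊π * R⌋ := Int.floor_le_floor (by
        have := mul_pos Real.pi_pos hR; linarith)
      omega
    have h3 : (((⌊π * R⌋ + 1 - ⌊-(π * R)⌋).toNat : ℕ) : ℝ) =
        (⌊π * R⌋ + 1 - ⌊-(π * R)⌋ : ℝ) := by
      exact_mod_cast congrArg (fun n : ℤ => (n : ℝ)) (Int.toNat_of_nonneg h0)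
    push_cast
    rw [h3]
    nlinarith

/-- On a half circle, chord and arc are comparable; hence the part of a half circle of radius `r`
inside a square cell of side `1 / k` has angular measure at most `π / (k * r)`. -/
lemma volume_arc_le {k : ℕ} (hk : 0 < k) {r : ℝ} (hr : 0 < r) (z : ℤ × ℤ) (α : ℝ) :
    volume ({θ : ℝ | quant k ![r * cos θ, r * sin θ] = gridPt k z} ∩ Ioo α (α + π)) ≤
      ENNReal.ofReal (π / (k * r)) := by
  have hk' : (0 : ℝ) < k := by positivity
  refine (Real.volume_le_diam _).trans (Metric.ediam_le fun θ hθ φ hφ => ?_)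
  rw [edist_dist]
  refine ENNReal.ofReal_le_ofReal ?_
  obtain ⟨h1, h2, h3⟩ := hθ
  obtain ⟨h1', h2', h3'⟩ := hφ
  simp only [Set.mem_ofPred_eq, quant_eq_gridPt hk, Matrix.cons_val_zero, Matrix.cons_val_one] at h1 h1'
  obtain ⟨⟨a1, a2⟩, a3, a4⟩ := h1
  obtain ⟨⟨b1, b2⟩, b3, b4⟩ := h1'
  rw [add_div] at a2 a4 b2 b4
  set δ : ℝ := 1 / k with hδ
  have hδ0 : 0 < δ := by positivity
  have e1 : (r * cos θ - r * cos φ) ^ 2 ≤ δ ^ 2 := sq_le_sq' (by linarith) (by linarith)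
  have e2 : (r * sin θ - r * sin φ) ^ 2 ≤ δ ^ 2 := sq_le_sq' (by linarith) (by linarith)
  rw [Real.dist_eq]
  set d := |θ - φ| with hd
  have hdπ : d ≤ π := by rw [hd, abs_le]; constructor <;> linarith
  have hd0 : 0 ≤ d := abs_nonneg _
  have hcos : cos d = cos θ * cos φ + sin θ * sin φ := by rw [hd, Real.cos_abs, Real.cos_sub]
  have hsin : cos d = 1 - 2 * sin (d / 2) ^ 2 := by
    have := Real.cos_sq' (d / 2)
    have h := Real.cos_two_mul (d / 2)
    rw [show 2 * (d / 2) = d by ring] at h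
    rw [h, this]; ring
  have hchord : 4 * r ^ 2 * sin (d / 2) ^ 2 ≤ 4 * δ ^ 2 := by
    have t1 := Real.sin_sq_add_cos_sq θ
    have t2 := Real.sin_sq_add_cos_sq φ
    have : 4 * r ^ 2 * sin (d / 2) ^ 2 =
        (r * cos θ - r * cos φ) ^ 2 + (r * sin θ - r * sin φ) ^ 2 := by
      have : 2 * sin (d / 2) ^ 2 = 1 - (cos θ * cos φ + sin θ * sin φ) := by linarith
      linear_combination 2 * r ^ 2 * this - r ^ 2 * t1 - r ^ 2 * t2
    nlinarith [sq_nonneg δ]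
  have hj := Real.mul_le_sin (x := d / 2) (by linarith) (by linarith)
  have h5 : r * sin (d / 2) ≤ δ := by
    apply le_of_sq_le_sq _ hδ0.le
    nlinarith
  have h6 : r * (2 / π * (d / 2)) ≤ δ := (mul_le_mul_of_nonneg_left hj hr.le).trans h5
  have hπ := Real.pi_pos
  have h7 : r * (2 / π * (d / 2)) = r * d / π := by field_simp
  rw [h7, div_le_iff₀ hπ] at h6
  rw [le_div_iff₀ (by positivity)]
  have h8 : k * (r * d) ≤ k * (δ * π) := mul_le_mul_of_nonneg_left h6 hk'.le
  have h9 : k * (δ * π) = π := by rw [hδ]; field_simp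
  linarith

/-- Integration in polar coordinates, with the circle cut into its lower and upper halves. -/
lemma lintegral_polar (F : (Fin 2 → ℝ) → ENNReal) (hF : Measurable F) :
    ∫⁻ x, F x = ∫⁻ r in Ioi (0 : ℝ), ((∫⁻ θ in Ioo (-π) 0,
        ENNReal.ofReal r * F ![r * cos θ, r * sin θ]) +
      ∫⁻ θ in Ioo 0 π, ENNReal.ofReal r * F ![r * cos θ, r * sin θ]) := by
  have hmv : Measurable fun p : ℝ × ℝ => (![p.1, p.2] : Fin 2 → ℝ) := by
    refine measurable_pi_lambda _ fun i => ?_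
    fin_cases i <;> simp <;> fun_prop
  have h1 : ∫⁻ x, F x = ∫⁻ p : ℝ × ℝ, F ![p.1, p.2] := by
    rw [← (volume_preserving_finTwoArrow ℝ).lintegral_comp (f := fun p : ℝ × ℝ => F ![p.1, p.2])
      (hF.comp hmv)]
    refine lintegral_congr fun x => congrArg F ?_
    ext i; fin_cases i <;> simp
  have hmeas : Measurable fun p : ℝ × ℝ =>
      ENNReal.ofReal p.1 * F ![p.1 * cos p.2, p.1 * sin p.2] := by
    refine (by fun_prop : Measurable fun p : ℝ × ℝ => ENNReal.ofReal p.1).mul ?_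
    exact (hF.comp hmv).comp (g := fun p : ℝ × ℝ => F ![p.1, p.2])
      (f := fun p : ℝ × ℝ => (p.1 * cos p.2, p.1 * sin p.2)) (by fun_prop)
  rw [h1, ← lintegral_comp_polarCoord_symm, polarCoord_target]
  simp only [polarCoord_symm_apply, smul_eq_mul]
  rw [Measure.volume_eq_prod, setLIntegral_prod _ hmeas.aemeasurable]
  refine lintegral_congr fun r => ?_
  have hπ := Real.pi_pos
  rw [← Ioc_union_Ioo_eq_Ioo (show -π ≤ 0 by linarith) hπ,
    lintegral_union measurableSet_Ioo]
  · simp only [restrict_Ioo_eq_restrict_Ioc]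
  · exact Set.disjoint_left.2 fun x hx hy => not_lt.2 hx.2 hy.1
/-! ### Gaussian bounds on the density -/

/-- A density on the plane squeezed between two centred isotropic Gaussian profiles. -/
structure GaussLike (f : (Fin 2 → ℝ) → ℝ) (a b c : ℝ) : Prop where
  meas : Measurable f
  a_pos : 0 < a
  b_nonneg : 0 ≤ b
  c_pos : 0 < c
  lower : ∀ x, c * rexp (-(b * nrm2 x ^ 2)) ≤ f x
  upper : ∀ x, f x ≤ c * rexp (-(a * nrm2 x ^ 2))

lemma GaussLike.le_const {f : (Fin 2 → ℝ) → ℝ} {a b c : ℝ} (h : GaussLike f a b c) (x) :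
    f x ≤ c := by
  refine (h.upper x).trans (mul_le_of_le_one_right h.c_pos.le ?_)
  rw [Real.exp_le_one_iff]
  have := mul_nonneg h.a_pos.le (sq_nonneg (nrm2 x))
  linarith

open Matrix in
lemma gaussLike_gaussDensity (C : Matrix (Fin 2) (Fin 2) ℝ) (hC : C.PosDef) :
    ∃ a b c, GaussLike (gaussDensity C) a b c := by
  set M := C⁻¹ with hM
  have hMp : M.PosDef := hC.inv
  have hdet : 0 < M.det := hMp.det_pos
  have h00 : 0 < M 0 0 := hMp.diag_pos
  have h11 : 0 < M 1 1 := hMp.diag_pos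
  have hsymm : M 1 0 = M 0 1 := by
    have := hMp.isHermitian.apply 0 1
    simpa using this
  have hq : ∀ x : Fin 2 → ℝ, x ⬝ᵥ M.mulVec x =
      M 0 0 * x 0 ^ 2 + 2 * M 0 1 * (x 0 * x 1) + M 1 1 * x 1 ^ 2 := by
    intro x
    simp only [dotProduct, mulVec, Fin.sum_univ_two, hsymm]
    ring
  rw [Matrix.det_fin_two, hsymm] at hdet
  set D := M 0 0 * M 1 1 - M 0 1 * M 0 1 with hD
  set T := M 0 0 + M 1 1 with hT
  have hTp : 0 < T := add_pos h00 h11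
  have hc : 0 < (2 * π) ^ (-((2 : ℕ) : ℝ) / 2) * C.det ^ (-(1 : ℝ) / 2) :=
    mul_pos (Real.rpow_pos_of_pos (by positivity) _) (Real.rpow_pos_of_pos hC.det_pos _)
  refine ⟨D / T / 2, (T + 2 * |M 0 1|) / 2, _, ?_, by positivity, by positivity, hc, ?_, ?_⟩
  · unfold gaussDensity
    rw [← hM]
    simp only [hq]
    fun_prop
  · intro x
    unfold gaussDensity
    refine mul_le_mul_of_nonneg_left (Real.exp_le_exp.2 ?_) hc.le
    rw [← hM, hq, nrm2_sq]
    have h1 : M 0 1 * (x 0 * x 1) ≤ |M 0 1| * (x 0 ^ 2 + x 1 ^ 2) := by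
      refine (le_abs_self _).trans ?_
      rw [abs_mul]
      refine mul_le_mul_of_nonneg_left ?_ (abs_nonneg _)
      rw [abs_le]
      constructor <;> nlinarith [sq_nonneg (x 0 + x 1), sq_nonneg (x 0 - x 1)]
    nlinarith [mul_nonneg h00.le (sq_nonneg (x 1)), mul_nonneg h11.le (sq_nonneg (x 0))]
  · intro x
    unfold gaussDensity
    refine mul_le_mul_of_nonneg_left (Real.exp_le_exp.2 ?_) hc.le
    rw [← hM, hq, nrm2_sq]
    -- Cayley-Hamilton: `T * xᵀMx - D * ‖x‖² = ‖Mx‖² ≥ 0`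
    have h1 : D / T * (x 0 ^ 2 + x 1 ^ 2) ≤
        M 0 0 * x 0 ^ 2 + 2 * M 0 1 * (x 0 * x 1) + M 1 1 * x 1 ^ 2 := by
      rw [div_mul_eq_mul_div, div_le_iff₀ hTp]
      nlinarith [sq_nonneg (M 0 0 * x 0 + M 0 1 * x 1), sq_nonneg (M 0 1 * x 0 + M 1 1 * x 1)]
    linarith

/-- The first component carries the sign of `x 1` and the norm of `x`; this is the PCA output
off the coordinate axes. -/
noncomputable def radial (x : Fin 2 → ℝ) : Fin 2 → ℝ := ![Real.sign (x 1) * nrm2 x, 0]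

lemma measurable_radial : Measurable radial := by
  have hs : Measurable Real.sign := by
    unfold Real.sign
    exact Measurable.ite measurableSet_Iio measurable_const
      (Measurable.ite measurableSet_Ioi measurable_const measurable_const)
  refine measurable_pi_lambda _ fun i => ?_
  fin_cases i
  · exact (hs.comp (measurable_pi_apply 1)).mul measurable_nrm2
  · exact measurable_const

/-- Bound on the conditional probability of a cell of side `1 / k`, given that the signed norm is
`± r`: the cell takes up an angle of at most `π / (k * r)` of the angle `π` of the half circle, and
the density varies along the circle by a factor of at most `exp (b * r ^ 2)`. -/
noncomputable def cellBound (b : ℝ) (k : ℕ) (r : ℝ) : ℝ := rexp (b * r ^ 2) / (k * r)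

/-- The comparison on a single half circle of radius `r`, on which `radial` is constant. -/
lemma halfCircle_le {f : (Fin 2 → ℝ) → ℝ} {a b c : ℝ} (h : GaussLike f a b c) {k : ℕ}
    (hk : 0 < k) (z : ℤ × ℤ) (A : Set (Fin 2 → ℝ)) {r : ℝ} (hr : 0 < r) (α : ℝ)
    (y : Fin 2 → ℝ) (hy : ∀ θ ∈ Ioo α (α + π), radial ![r * cos θ, r * sin θ] = y) :
    ∫⁻ θ in Ioo α (α + π), ENNReal.ofReal r * ({x | quant k x = gridPt k z} ∩
        radial ⁻¹' A).indicator (fun x => ENNReal.ofReal (f x)) ![r * cos θ, r * sin θ] ≤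
    ∫⁻ θ in Ioo α (α + π), ENNReal.ofReal r * (radial ⁻¹' A).indicator
        (fun x => ENNReal.ofReal (cellBound b k (nrm2 x)) * ENNReal.ofReal (f x))
        ![r * cos θ, r * sin θ] := by
  classical
  have hπ := Real.pi_pos
  have hk' : (0 : ℝ) < k := by positivity
  by_cases hyA : y ∈ A
  swap
  · refine (setLIntegral_mono' measurableSet_Ioo (g := fun _ => 0) fun θ hθ => ?_).trans (by simp)
    rw [indicator_of_notMem]
    · simp
    · rintro ⟨-, hA⟩
      rw [mem_preimage, hy θ hθ] at hA
      exact hyA hA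
  set E : Set ℝ := {θ : ℝ | quant k ![r * cos θ, r * sin θ] = gridPt k z} with hE
  have hEm : MeasurableSet E := by
    have : Measurable fun θ : ℝ => quant k ![r * cos θ, r * sin θ] := by
      refine (measurable_quant k).comp (measurable_pi_lambda _ fun i => ?_)
      fin_cases i <;> simp <;> fun_prop
    exact this (measurableSet_singleton _)
  calc _ ≤ ∫⁻ θ in Ioo α (α + π), E.indicator (fun _ => ENNReal.ofReal (r * c)) θ := by
        refine lintegral_mono fun θ => ?_
        by_cases hθ : θ ∈ E
        · rw [indicator_of_mem hθ, ENNReal.ofReal_mul hr.le]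
          gcongr
          exact (indicator_le_self _ _ _).trans (ENNReal.ofReal_le_ofReal (h.le_const _))
        · rw [indicator_of_notMem (fun hh => hθ hh.1)]
          simp
    _ = ENNReal.ofReal (r * c) * volume (E ∩ Ioo α (α + π)) := by
        rw [lintegral_indicator_const hEm, Measure.restrict_apply hEm]
    _ ≤ ENNReal.ofReal (r * c) * ENNReal.ofReal (π / (k * r)) := by
        gcongr
        exact volume_arc_le hk hr z α
    _ = ∫⁻ θ in Ioo α (α + π), ENNReal.ofReal (r * (cellBound b k r *
          (c * rexp (-(b * r ^ 2))))) := by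
        rw [setLIntegral_const, Real.volume_Ioo, ← ENNReal.ofReal_mul (by have := h.c_pos; positivity),
          ← ENNReal.ofReal_mul (by have := h.c_pos; unfold cellBound; positivity)]
        congr 1
        unfold cellBound
        rw [Real.exp_neg]
        have := Real.exp_pos (b * r ^ 2)
        field_simp
        ring
    _ ≤ _ := by
        refine setLIntegral_mono' measurableSet_Ioo fun θ hθ => ?_
        rw [indicator_of_mem (by rw [mem_preimage, hy θ hθ]; exact hyA), nrm2_polar hr.le,
          ENNReal.ofReal_mul hr.le, ENNReal.ofReal_mul (by unfold cellBound; positivity)]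
        gcongr
        have := h.lower ![r * cos θ, r * sin θ]
        rwa [nrm2_polar hr.le] at this

/-- The defining inequality for `cellBound`: integrating it against the law of `radial` dominates
the joint law of the quantized point and `radial`. -/
lemma lintegral_cell_le {f : (Fin 2 → ℝ) → ℝ} {a b c : ℝ} (h : GaussLike f a b c) {k : ℕ}
    (hk : 0 < k) (z : ℤ × ℤ) {A : Set (Fin 2 → ℝ)} (hA : MeasurableSet A) :
    ∫⁻ x, ({x | quant k x = gridPt k z} ∩ radial ⁻¹' A).indicator
        (fun x => ENNReal.ofReal (f x)) x ≤
    ∫⁻ x, (radial ⁻¹' A).indicator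
        (fun x => ENNReal.ofReal (cellBound b k (nrm2 x)) * ENNReal.ofReal (f x)) x := by
  have hAm : MeasurableSet (radial ⁻¹' A) := measurable_radial hA
  have hEm : MeasurableSet {x | quant k x = gridPt k z} :=
    measurable_quant k (measurableSet_singleton _)
  have hm := measurable_nrm2
  have hfm := h.meas
  rw [lintegral_polar _ (Measurable.indicator (by fun_prop) (hEm.inter hAm)),
    lintegral_polar _ (Measurable.indicator (by unfold cellBound; fun_prop) hAm)]
  refine setLIntegral_mono' measurableSet_Ioi fun r hr => ?_
  have hr : 0 < r := hr
  refine add_le_add ?_ ?_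
  · have := halfCircle_le h hk z A hr (-π) ![-r, 0] ?_
    · rwa [neg_add_cancel] at this
    · intro θ hθ
      rw [neg_add_cancel] at hθ
      have := Real.sin_neg_of_neg_of_neg_pi_lt hθ.2 hθ.1
      rw [radial, nrm2_polar hr.le]
      simp [Real.sign_of_neg (mul_neg_of_pos_of_neg hr this)]
  · have := halfCircle_le h hk z A hr 0 ![r, 0] ?_
    · rwa [zero_add] at this
    · intro θ hθ
      rw [zero_add] at hθ
      have := Real.sin_pos_of_mem_Ioo hθ
      rw [radial, nrm2_polar hr.le]
      simp [Real.sign_of_pos (mul_pos hr this)]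

/-- Both `‖x‖²` and `1 / ‖x‖` are integrable; the latter controls `-log ‖x‖` near the origin. -/
lemma lintegral_moment_lt_top {f : (Fin 2 → ℝ) → ℝ} {a b c : ℝ} (h : GaussLike f a b c) :
    ∫⁻ x, ENNReal.ofReal ((nrm2 x)⁻¹ + nrm2 x ^ 2) * ENNReal.ofReal (f x) < ⊤ := by
  have hπ := Real.pi_pos
  have hm := measurable_nrm2
  have hfm := h.meas
  rw [lintegral_polar _ (by fun_prop)]
  have hbd : ∀ r ∈ Ioi (0 : ℝ), ∀ θ, ENNReal.ofReal r * (ENNReal.ofReal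
      ((nrm2 ![r * cos θ, r * sin θ])⁻¹ + nrm2 ![r * cos θ, r * sin θ] ^ 2) *
        ENNReal.ofReal (f ![r * cos θ, r * sin θ])) ≤
      ENNReal.ofReal (c * (r ^ (0 : ℝ) * rexp (-a * r ^ 2) + r ^ (3 : ℝ) * rexp (-a * r ^ 2))) := by
    intro r hr θ
    have hr : 0 < r := hr
    have h1 := h.upper ![r * cos θ, r * sin θ]
    rw [nrm2_polar hr.le] at h1 ⊢
    rw [← ENNReal.ofReal_mul (by positivity), ← ENNReal.ofReal_mul hr.le]
    refine ENNReal.ofReal_le_ofReal ?_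
    calc r * ((r⁻¹ + r ^ 2) * f ![r * cos θ, r * sin θ]) ≤
        r * ((r⁻¹ + r ^ 2) * (c * rexp (-(a * r ^ 2)))) := by gcongr
      _ = _ := by
        rw [Real.rpow_zero, show (3 : ℝ) = ((3 : ℕ) : ℝ) by norm_num, Real.rpow_natCast, neg_mul]
        field_simp
  have hint : Integrable (fun r : ℝ => c * (r ^ (0 : ℝ) * rexp (-a * r ^ 2) +
      r ^ (3 : ℝ) * rexp (-a * r ^ 2))) :=
    ((integrable_rpow_mul_exp_neg_mul_sq h.a_pos (by norm_num)).add
      (integrable_rpow_mul_exp_neg_mul_sq h.a_pos (by norm_num))).const_mul c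
  have hmc : Measurable fun r : ℝ => ENNReal.ofReal (c * (r ^ (0 : ℝ) * rexp (-a * r ^ 2) +
      r ^ (3 : ℝ) * rexp (-a * r ^ 2))) := by fun_prop
  calc _ ≤ ∫⁻ r in Ioi (0 : ℝ), ENNReal.ofReal (2 * π) * ENNReal.ofReal
        (c * (r ^ (0 : ℝ) * rexp (-a * r ^ 2) + r ^ (3 : ℝ) * rexp (-a * r ^ 2))) := by
        refine setLIntegral_mono' measurableSet_Ioi fun r hr => ?_
        refine (add_le_add (lintegral_mono fun θ => hbd r hr θ)
          (lintegral_mono fun θ => hbd r hr θ)).trans (le_of_eq ?_)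
        rw [setLIntegral_const, setLIntegral_const, ← mul_add, Real.volume_Ioo, Real.volume_Ioo,
          ← ENNReal.ofReal_add (by linarith) (by linarith), mul_comm]
        congr 2
        ring
    _ < ⊤ := by
        rw [lintegral_const_mul _ hmc]
        refine ENNReal.mul_lt_top ENNReal.ofReal_lt_top ?_
        exact (setLIntegral_le_lintegral _ _).trans_lt hint.lintegral_lt_top
/-! ### Entropy of the quantized vector -/

lemma ae_coord_ne_zero (i : Fin 2) : ∀ᵐ x : Fin 2 → ℝ, x i ≠ 0 := by
  have h : Measure.QuasiMeasurePreserving (Function.eval i : (Fin 2 → ℝ) → ℝ) volume volume :=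
    Measure.quasiMeasurePreserving_eval (fun _ => volume) i
  exact h.ae (Measure.ae_ne volume 0)

lemma quant_cell_bounds {k : ℕ} (hk : 0 < k) {x : Fin 2 → ℝ} {z : ℤ × ℤ}
    (h : quant k x = gridPt k z) :
    nrm2 x ^ 2 ≤ 2 * nrm2 (gridPt k z) ^ 2 + 4 ∧ nrm2 (gridPt k z) ^ 2 ≤ 2 * nrm2 x ^ 2 + 4 := by
  rw [quant_eq_gridPt hk] at h
  simp only [nrm2_sq, gridPt, Matrix.cons_val_zero, Matrix.cons_val_one]
  obtain ⟨⟨a1, a2⟩, a3, a4⟩ := h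
  rw [add_div] at a2 a4
  have hk1 : (1 : ℝ) / k ≤ 1 := by
    rw [div_le_one (by positivity)]; exact_mod_cast hk
  generalize (z.1 : ℝ) / k = u at *
  generalize (z.2 : ℝ) / k = v at *
  have e1 : (x 0 - u) ^ 2 ≤ 1 := by nlinarith
  have e2 : (x 1 - v) ^ 2 ≤ 1 := by nlinarith
  constructor <;> nlinarith [sq_nonneg (x 0 - 2 * u), sq_nonneg (x 1 - 2 * v),
    sq_nonneg (2 * x 0 - u), sq_nonneg (2 * x 1 - v)]

lemma measurableSet_cell (k : ℕ) (z : ℤ × ℤ) : MeasurableSet {x | quant k x = gridPt k z} :=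
  measurable_quant k (measurableSet_singleton _)

lemma volume_cell {k : ℕ} (hk : 0 < k) (z : ℤ × ℤ) :
    volume {x | quant k x = gridPt k z} = ENNReal.ofReal (1 / (k : ℝ) ^ 2) := by
  have hk' : (0 : ℝ) < k := by positivity
  have : {x | quant k x = gridPt k z} = univ.pi fun i : Fin 2 =>
      Ico ((![(z.1 : ℝ) / k, (z.2 : ℝ) / k] : Fin 2 → ℝ) i)
        ((![((z.1 : ℝ) + 1) / k, ((z.2 : ℝ) + 1) / k] : Fin 2 → ℝ) i) := by
    ext x
    simp [quant_eq_gridPt hk, Set.mem_pi, Fin.forall_fin_two]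
  rw [this, Real.volume_pi_Ico, Fin.prod_univ_two, ← ENNReal.ofReal_mul]
  · congr 1
    simp only [Matrix.cons_val_zero, Matrix.cons_val_one]
    field_simp
    ring
  · simp only [Matrix.cons_val_zero]
    rw [← sub_div]
    simp

lemma GaussLike.integrable_moment {f : (Fin 2 → ℝ) → ℝ} {a b c : ℝ} (h : GaussLike f a b c) :
    Integrable (fun x => (nrm2 x)⁻¹ + nrm2 x ^ 2)
      (volume.withDensity fun x => ENNReal.ofReal (f x)) := by
  have hm := measurable_nrm2
  have hfm := h.meas
  refine ⟨by fun_prop, ?_⟩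
  rw [hasFiniteIntegral_iff_ofReal
    (ae_of_all _ fun x => add_nonneg (inv_nonneg.2 (nrm2_nonneg x)) (sq_nonneg _)),
    lintegral_withDensity_eq_lintegral_mul _ (by fun_prop) (by fun_prop)]
  simp only [Pi.mul_apply, mul_comm (ENNReal.ofReal (f _))]
  exact lintegral_moment_lt_top h

/-- Comparing the density with its values on each cell, and using finite second moments, gives
`H(X̂ₖ) = 2 log k + O(1)`. -/
lemma entropy_quant {f : (Fin 2 → ℝ) → ℝ} {a b c : ℝ} (h : GaussLike f a b c)
    (μ : Measure (Fin 2 → ℝ)) [IsProbabilityMeasure μ]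
    (hμ : μ = volume.withDensity fun x => ENNReal.ofReal (f x)) :
    ∃ K, ∀ k : ℕ, 0 < k → |mEnt (μ.map (quant k)) - 2 * log k| ≤ K := by
  have hm := measurable_nrm2
  have hfm := h.meas
  have hc := h.c_pos
  have hb := h.b_nonneg
  have hmom : ∫⁻ x, ENNReal.ofReal (2 * nrm2 x ^ 2 + 4) ∂μ ≠ ⊤ := by
    have hi := h.integrable_moment
    rw [← hμ] at hi
    have : Integrable (fun x => 2 * nrm2 x ^ 2 + 4) μ := by
      refine ((hi.const_mul 2).add (integrable_const 4)).mono' (by fun_prop)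
        (ae_of_all _ fun x => ?_)
      have := inv_nonneg.2 (nrm2_nonneg x)
      rw [Real.norm_of_nonneg (by positivity)]
      simp only [Pi.add_apply]
      linarith
    exact this.lintegral_lt_top.ne
  set L := ∫⁻ x, ENNReal.ofReal (2 * nrm2 x ^ 2 + 4) ∂μ with hL
  refine ⟨|log c| + 4 * b + 2 * b * L.toReal, fun k hk => ?_⟩
  have hk' : (0 : ℝ) < k := by positivity
  have hpm : IsProbabilityMeasure (μ.map (quant k)) :=
    Measure.isProbabilityMeasure_map (measurable_quant k).aemeasurable
  have hsupp : (μ.map (quant k)) (range (gridPt k))ᶜ = 0 := by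
    rw [Measure.map_apply (measurable_quant k) (countable_range _).measurableSet.compl]
    convert measure_empty (μ := μ)
    ext x
    simp [quant_eq]
  have hmap : ∀ z, (μ.map (quant k)) {gridPt k z} = μ {x | quant k x = gridPt k z} := fun z =>
    Measure.map_apply (measurable_quant k) (measurableSet_singleton _)
  have hcell : ∀ z, μ {x | quant k x = gridPt k z} =
      ∫⁻ x in {x | quant k x = gridPt k z}, ENNReal.ofReal (f x) := fun z => by
    rw [hμ, withDensity_apply _ (measurableSet_cell k z)]
  set p : ℤ × ℤ → ℝ := fun z => ((μ.map (quant k)) {gridPt k z}).toReal with hp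
  have hp0 : ∀ z, 0 ≤ p z := fun z => ENNReal.toReal_nonneg
  have hpsum : HasSum p 1 := grid_hasSum hk _ hsupp
  have hup : ∀ z, p z ≤ c * (1 / (k : ℝ) ^ 2) := by
    intro z
    refine ENNReal.toReal_le_of_le_ofReal (by positivity) ?_
    rw [hmap, hcell, ENNReal.ofReal_mul hc.le, ← volume_cell hk z, ← setLIntegral_const]
    exact lintegral_mono fun x => ENNReal.ofReal_le_ofReal (h.le_const x)
  set w : ℤ × ℤ → ℝ := fun z =>
    2 * log k - log c + b * (2 * nrm2 (gridPt k z) ^ 2 + 4) with hw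
  have hlow : ∀ z, rexp (- w z) ≤ p z := by
    intro z
    have h1 : rexp (- w z) = c * rexp (-(b * (2 * nrm2 (gridPt k z) ^ 2 + 4))) *
        (1 / (k : ℝ) ^ 2) := by
      have : - w z = log c + -(b * (2 * nrm2 (gridPt k z) ^ 2 + 4)) + - (2 * log k) := by
        simp only [hw]; ring
      rw [this, Real.exp_add, Real.exp_add, Real.exp_log hc, Real.exp_neg (2 * log k),
        two_mul (log (k : ℝ)), Real.exp_add, Real.exp_log hk', one_div, sq (k : ℝ)]
    rw [h1]
    refine (ENNReal.ofReal_le_iff_le_toReal (measure_ne_top _ _)).1 ?_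
    rw [hmap, hcell, ENNReal.ofReal_mul (by positivity), ← volume_cell hk z, ← setLIntegral_const]
    refine setLIntegral_mono' (measurableSet_cell k z) fun x hx => ENNReal.ofReal_le_ofReal ?_
    refine le_trans ?_ (h.lower x)
    gcongr
    exact (quant_cell_bounds hk hx).1
  set q : ℤ × ℤ → ENNReal := fun z =>
    ENNReal.ofReal (nrm2 (gridPt k z) ^ 2) * μ {x | quant k x = gridPt k z} with hq
  have hqL : ∑' z, q z ≤ L := by
    calc ∑' z, q z ≤ ∑' z, ∫⁻ x in {x | quant k x = gridPt k z},
          ENNReal.ofReal (2 * nrm2 x ^ 2 + 4) ∂μ := by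
          refine ENNReal.tsum_le_tsum fun z => ?_
          simp only [hq]
          rw [← setLIntegral_const]
          refine setLIntegral_mono' (measurableSet_cell k z) fun x hx =>
            ENNReal.ofReal_le_ofReal (quant_cell_bounds hk hx).2
      _ = ∫⁻ x in ⋃ z, {x | quant k x = gridPt k z}, ENNReal.ofReal (2 * nrm2 x ^ 2 + 4) ∂μ := by
          rw [lintegral_iUnion (measurableSet_cell k)]
          intro z z' hzz
          refine Set.disjoint_left.2 fun x hx hx' => hzz (gridPt_injective hk ?_)
          exact (show quant k x = gridPt k z from hx).symm.trans hx'
      _ ≤ L := setLIntegral_le_lintegral _ _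
  have hqt : ∑' z, q z ≠ ⊤ := ne_top_of_le_ne_top hmom hqL
  have hqp : ∀ z, (q z).toReal = nrm2 (gridPt k z) ^ 2 * p z := by
    intro z
    simp only [hq, hp, hmap]
    rw [ENNReal.toReal_mul, ENNReal.toReal_ofReal (sq_nonneg _)]
  have hqs : HasSum (fun z => nrm2 (gridPt k z) ^ 2 * p z) (∑' z, q z).toReal := by
    have := ENNReal.hasSum_toReal hqt
    rw [← ENNReal.tsum_toReal_eq (fun z => ENNReal.ne_top_of_tsum_ne_top hqt z)] at this
    simpa only [hqp] using this
  have hpw : HasSum (fun z => p z * w z)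
      (1 * (2 * log k - log c + 4 * b) + 2 * b * (∑' z, q z).toReal) := by
    have h1 := (hpsum.mul_right (2 * log k - log c + 4 * b)).add (hqs.mul_left (2 * b))
    have h2 : (fun z => p z * w z) = fun z => p z * (2 * log k - log c + 4 * b) +
        2 * b * (nrm2 (gridPt k z) ^ 2 * p z) := by
      funext z
      simp only [hw]
      ring
    rwa [h2]
  obtain ⟨hs1, hs2⟩ := entropy_le_of_exp_neg_le p w hp0 hpsum hlow hpw.summable
  have hs3 := neg_log_le_entropy p hp0 hpsum _ hup hs1
  rw [grid_mEnt hk _ hsupp]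
  rw [hpw.tsum_eq] at hs2
  have h4 : log (c * (1 / (k : ℝ) ^ 2)) = log c - 2 * log k := by
    rw [Real.log_mul hc.ne' (by positivity), one_div, Real.log_inv, Real.log_pow]
    push_cast; ring
  rw [h4] at hs3
  have h5 : (∑' z, q z).toReal ≤ L.toReal := ENNReal.toReal_mono hmom hqL
  have h6 := mul_le_mul_of_nonneg_left h5 (by positivity : 0 ≤ 2 * b)
  have h7 : 0 ≤ 2 * b * L.toReal := by positivity
  rw [abs_le]
  constructor
  · linarith [le_abs_self (log c)]
  · linarith [neg_abs_le (log c)]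
/-! ### Conditional entropy given the signed norm -/

lemma setLIntegral_condDistrib (μ : Measure (Fin 2 → ℝ)) [IsProbabilityMeasure μ] (k : ℕ)
    {A B : Set (Fin 2 → ℝ)} (hA : MeasurableSet A) (hB : MeasurableSet B) :
    ∫⁻ y in A, condDistrib (quant k) radial μ y B ∂(μ.map radial) =
      μ (quant k ⁻¹' B ∩ radial ⁻¹' A) := by
  rw [← Measure.compProd_apply_prod hA hB,
    compProd_map_condDistrib (measurable_quant k).aemeasurable,
    Measure.map_apply (measurable_radial.prodMk (measurable_quant k)) (hA.prod hB)]
  congr 1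
  ext x
  simp [and_comm]

/-- The radius enters the conditional entropy only through a quantity integrable under the law of
`radial`: the logarithm of `cellBound` from below, the number of cells met by the circle from
above. -/
lemma condEntropy_pointwise {k : ℕ} (hk : 0 < k) {b r : ℝ} (hb : 0 ≤ b) (hr : 0 < r)
    (ν : Measure (Fin 2 → ℝ)) [IsProbabilityMeasure ν] (hν : ν (range (gridPt k))ᶜ = 0)
    (h1 : ∀ z, ν {gridPt k z} ≤ ENNReal.ofReal (cellBound b k r))
    (h2 : ∀ z : ℤ × ℤ, 2 < |‖(z.1 : ℂ) + z.2 * Complex.I‖ - k * r| → ν {gridPt k z} = 0) :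
    |mEnt ν - log k| ≤ (810 + b) * (1 + (r⁻¹ + r ^ 2)) := by
  have hk' : (0 : ℝ) < k := by positivity
  have hk1 : (1 : ℝ) ≤ k := by exact_mod_cast hk
  have hri : 0 < r⁻¹ := inv_pos.2 hr
  obtain ⟨S, hS, hcard⟩ := annulus_count (mul_pos hk' hr)
  set p : ℤ × ℤ → ℝ := fun z => (ν {gridPt k z}).toReal with hp
  have hp0 : ∀ z, 0 ≤ p z := fun z => ENNReal.toReal_nonneg
  have hpsum : HasSum p 1 := grid_hasSum hk _ hν
  have hpS : ∀ z ∉ S, p z = 0 := by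
    intro z hz
    have := h2 z (not_le.1 fun hle => hz (hS z hle))
    simp [hp, this]
  have hnS : ∀ z ∉ S, negMulLog (p z) = 0 := fun z hz => by rw [hpS z hz]; simp
  have hS1 : ∑ z ∈ S, p z = 1 := by rw [← hpsum.tsum_eq, tsum_eq_sum hpS]
  rw [grid_mEnt hk _ hν]
  have hpB : ∀ z, p z ≤ cellBound b k r := fun z =>
    ENNReal.toReal_le_of_le_ofReal (by unfold cellBound; positivity) (h1 z)
  have hlow := neg_log_le_entropy p hp0 hpsum _ hpB (summable_of_ne_finset_zero (s := S) hnS)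
  have hN : (S.card : ℝ) ≤ k * (81 * (2 * π * r + 2)) := by
    refine hcard.trans ?_
    nlinarith
  have hπ := Real.pi_pos
  have hup := entropy_le_log_card p hp0 S hS1 _ (by positivity) hN
  have htsum : ∑' z, negMulLog (p z) = ∑ z ∈ S, negMulLog (p z) := tsum_eq_sum hnS
  rw [← htsum] at hup
  have e1 : log (k * (81 * (2 * π * r + 2))) ≤ log k + 81 * (2 * π * r + 2) := by
    rw [Real.log_mul hk'.ne' (by positivity)]
    have := Real.log_le_sub_one_of_pos (show 0 < 81 * (2 * π * r + 2) by positivity)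
    linarith
  have e2 : log (cellBound b k r) = b * r ^ 2 - (log k + log r) := by
    unfold cellBound
    rw [Real.log_div (Real.exp_pos _).ne' (by positivity), Real.log_exp,
      Real.log_mul hk'.ne' hr.ne']
  have e3 := Real.one_sub_inv_le_log_of_pos hr
  rw [e2] at hlow
  have e4 : π * r ≤ 4 * (1 + r ^ 2) := by
    nlinarith [Real.pi_lt_four, sq_nonneg (r - 1), sq_nonneg r]
  have e5 : 0 ≤ b * r⁻¹ := by positivity
  have e6 : 0 ≤ b * r ^ 2 := by positivity
  rw [abs_le]
  constructor
  · nlinarith [sq_nonneg r]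
  · nlinarith [sq_nonneg r]

/-- `H(X̂ₖ | radial) = log k + O(1)`. -/
lemma condEntropy_quant {f : (Fin 2 → ℝ) → ℝ} {a b c : ℝ} (h : GaussLike f a b c)
    (μ : Measure (Fin 2 → ℝ)) [IsProbabilityMeasure μ]
    (hμ : μ = volume.withDensity fun x => ENNReal.ofReal (f x)) :
    ∃ K, ∀ k : ℕ, 0 < k → |condEnt μ (quant k) radial - log k| ≤ K := by
  have hm := measurable_nrm2
  have hrm := measurable_radial
  have hfm := h.meas
  have hac : μ ≪ volume := by rw [hμ]; exact withDensity_absolutelyContinuous _ _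
  have hr : ∀ᵐ x ∂μ, |radial x 0| = nrm2 x ∧ 0 < nrm2 x := by
    filter_upwards [hac.ae_le (ae_coord_ne_zero 1)] with x hx
    refine ⟨?_, Real.sqrt_pos.2 (by positivity)⟩
    simp only [radial, Matrix.cons_val_zero]
    rw [abs_mul, abs_of_nonneg (nrm2_nonneg x)]
    rcases Real.sign_apply_eq_of_ne_zero _ hx with h1 | h1 <;> simp [h1]
  set H : (Fin 2 → ℝ) → ℝ := fun y => (810 + b) * (1 + (|y 0|⁻¹ + |y 0| ^ 2)) with hH
  have hHm : Measurable H := by fun_prop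
  have hpm : IsProbabilityMeasure (μ.map radial) :=
    Measure.isProbabilityMeasure_map hrm.aemeasurable
  have hHi : Integrable H (μ.map radial) := by
    rw [integrable_map_measure hHm.aestronglyMeasurable hrm.aemeasurable]
    have hi := h.integrable_moment
    rw [← hμ] at hi
    refine (((integrable_const 1).add hi).const_mul (810 + b)).congr ?_
    filter_upwards [hr] with x hx
    simp only [hH, Function.comp, Pi.add_apply, hx.1]
  refine ⟨∫ y, H y ∂(μ.map radial), fun k hk => ?_⟩
  have hk' : (0 : ℝ) < k := by positivity
  set κ := condDistrib (quant k) radial μ with hκ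
  have hκm : ∀ B, MeasurableSet B → Measurable fun y => κ y B := fun B hB => κ.measurable_coe hB
  have hpos : ∀ᵐ y ∂(μ.map radial), 0 < |y 0| := by
    rw [ae_map_iff hrm.aemeasurable (measurableSet_lt measurable_const (by fun_prop))]
    filter_upwards [hr] with x hx
    rw [hx.1]; exact hx.2
  have hsupp : ∀ᵐ y ∂(μ.map radial), κ y (range (gridPt k))ᶜ = 0 := by
    have hR : MeasurableSet (range (gridPt k))ᶜ := (countable_range _).measurableSet.compl
    have h1 := setLIntegral_condDistrib μ k MeasurableSet.univ hR
    have h2 : quant k ⁻¹' (range (gridPt k))ᶜ = ∅ := by ext x; simp [quant_eq]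
    rw [h2, empty_inter, measure_empty, Measure.restrict_univ,
      lintegral_eq_zero_iff (hκm _ hR)] at h1
    exact h1
  have hbound : ∀ᵐ y ∂(μ.map radial), ∀ z,
      κ y {gridPt k z} ≤ ENNReal.ofReal (cellBound b k |y 0|) := by
    rw [ae_all_iff]
    intro z
    have hcb : Measurable fun y : Fin 2 → ℝ => ENNReal.ofReal (cellBound b k |y 0|) := by
      unfold cellBound; fun_prop
    refine ae_le_of_forall_setLIntegral_le_of_sigmaFinite (hκm _ (measurableSet_singleton _))
      fun A hA _ => ?_
    rw [setLIntegral_condDistrib μ k hA (measurableSet_singleton _),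
      setLIntegral_map hA hcb hrm]
    have hAm : MeasurableSet (radial ⁻¹' A) := hrm hA
    calc μ (quant k ⁻¹' {gridPt k z} ∩ radial ⁻¹' A) =
          ∫⁻ x, ({x | quant k x = gridPt k z} ∩ radial ⁻¹' A).indicator
            (fun x => ENNReal.ofReal (f x)) x := by
          rw [lintegral_indicator ((measurableSet_cell k z).inter hAm), hμ,
            withDensity_apply _ ((measurable_quant k (measurableSet_singleton _)).inter hAm)]
          rfl
      _ ≤ ∫⁻ x, (radial ⁻¹' A).indicator (fun x => ENNReal.ofReal (cellBound b k (nrm2 x)) *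
            ENNReal.ofReal (f x)) x := lintegral_cell_le h hk z hA
      _ = ∫⁻ x in radial ⁻¹' A, ENNReal.ofReal (cellBound b k (nrm2 x)) ∂μ := by
          have hcm : Measurable fun x => ENNReal.ofReal (cellBound b k (nrm2 x)) := by
            unfold cellBound; fun_prop
          rw [lintegral_indicator hAm, hμ,
            setLIntegral_withDensity_eq_setLIntegral_mul _ (by fun_prop) hcm hAm]
          simp only [Pi.mul_apply, mul_comm (ENNReal.ofReal (f _))]
      _ ≤ _ := by
          refine le_of_eq (lintegral_congr_ae (ae_restrict_of_ae ?_))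
          filter_upwards [hr] with x hx
          rw [hx.1]
  have hzero : ∀ᵐ y ∂(μ.map radial), ∀ z : ℤ × ℤ,
      2 < |‖(z.1 : ℂ) + z.2 * Complex.I‖ - k * (|y 0|)| → κ y {gridPt k z} = 0 := by
    rw [ae_all_iff]
    intro z
    set A : Set (Fin 2 → ℝ) := {y | 2 < |‖(z.1 : ℂ) + z.2 * Complex.I‖ - k * (|y 0|)|} with hA
    have hAm : MeasurableSet A := measurableSet_lt measurable_const (by fun_prop)
    have h1 := setLIntegral_condDistrib μ k hAm (measurableSet_singleton (gridPt k z))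
    have h2 : μ (quant k ⁻¹' {gridPt k z} ∩ radial ⁻¹' A) = 0 := by
      rw [measure_eq_zero_iff_ae_notMem]
      filter_upwards [hr] with x hx ⟨hx1, hx2⟩
      have hx2 : 2 < |‖(z.1 : ℂ) + z.2 * Complex.I‖ - k * (|radial x 0|)| := hx2
      rw [hx.1, nrm2_eq_norm] at hx2
      have hq := (quant_eq_gridPt hk x z).1 hx1
      simp only [div_le_iff₀ hk', lt_div_iff₀ hk'] at hq
      have hkn : (k : ℝ) * ‖(x 0 : ℂ) + x 1 * Complex.I‖ =
          ‖(k : ℂ) * ((x 0 : ℂ) + x 1 * Complex.I)‖ := by simp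
      rw [hkn] at hx2
      have h3 := abs_norm_sub_norm_le ((z.1 : ℂ) + z.2 * Complex.I)
        ((k : ℂ) * ((x 0 : ℂ) + x 1 * Complex.I))
      have h4 := Complex.norm_le_abs_re_add_abs_im
        ((z.1 : ℂ) + z.2 * Complex.I - (k : ℂ) * ((x 0 : ℂ) + x 1 * Complex.I))
      simp only [Complex.sub_re, Complex.sub_im, Complex.add_re, Complex.add_im, Complex.mul_re,
        Complex.mul_im, Complex.I_re, Complex.I_im, Complex.intCast_re, Complex.intCast_im,
        Complex.natCast_re, Complex.natCast_im, Complex.ofReal_re, Complex.ofReal_im, mul_zero,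
        mul_one, zero_mul, sub_zero, add_zero, zero_add] at h4
      have h5 : |(z.1 : ℝ) - k * x 0| ≤ 1 := by rw [abs_le]; constructor <;> linarith
      have h6 : |(z.2 : ℝ) - k * x 1| ≤ 1 := by rw [abs_le]; constructor <;> linarith
      linarith
    rw [h2, setLIntegral_eq_zero_iff hAm (hκm _ (measurableSet_singleton _))] at h1
    exact h1
  have hmain : ∀ᵐ y ∂(μ.map radial), ‖mEnt (κ y) - log k‖ ≤ H y := by
    filter_upwards [hpos, hsupp, hbound, hzero] with y h1 h2 h3 h4
    exact condEntropy_pointwise hk h.b_nonneg h1 (κ y) h2 h3 h4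
  have hmeas : AEStronglyMeasurable (fun y => mEnt (κ y)) (μ.map radial) := by
    -- almost surely the uncountable sum in `mEnt` reduces to the grid, where all terms are
    -- nonnegative, so that it may be computed in `ℝ≥0∞`
    have h1 : Measurable fun y => (∑' z, ENNReal.ofReal
        (negMulLog (κ y {gridPt k z}).toReal)).toReal := by
      refine (Measurable.tsum fun z => ?_).ennreal_toReal
      exact (continuous_negMulLog.measurable.comp
        (hκm _ (measurableSet_singleton _)).ennreal_toReal).ennreal_ofReal
    refine h1.aestronglyMeasurable.congr ?_
    filter_upwards [hsupp] with y hy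
    rw [grid_mEnt hk _ hy, ENNReal.tsum_toReal_eq fun z => ENNReal.ofReal_ne_top]
    refine tsum_congr fun z => ENNReal.toReal_ofReal (negMulLog_nonneg ENNReal.toReal_nonneg ?_)
    exact ENNReal.toReal_le_of_le_ofReal zero_le_one (by simpa using prob_le_one)
  have hint : Integrable (fun y => mEnt (κ y) - log k) (μ.map radial) :=
    hHi.mono' (hmeas.sub aestronglyMeasurable_const) hmain
  have hint' : Integrable (fun y => mEnt (κ y)) (μ.map radial) := by
    exact (hint.add (integrable_const (log (k : ℝ)))).congr (ae_of_all _ fun y => by simp)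
  have hval : condEnt μ (quant k) radial - log k =
      ∫ y, (mEnt (κ y) - log k) ∂(μ.map radial) := by
    rw [integral_sub hint' (integrable_const _)]
    simp [condEnt, hκ]
  rw [hval, ← Real.norm_eq_abs]
  exact norm_integral_le_of_norm_le hHi hmain

/-! ### The PCA output and the limit -/

lemma pca_identities {x : Fin 2 → ℝ} (h0 : x 0 ≠ 0) (h1 : x 1 ≠ 0) :
    (sampCov x).mulVec (fun i => hatW x i 0) = (nrm2 x) ^ 2 • (fun i => hatW x i 0) ∧
      (sampCov x).mulVec (fun i => hatW x i 1) = 0 ∧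
      Matrix.mulVec (Matrix.transpose (hatW x)) x = ![Real.sign (x 1) * nrm2 x, 0] := by
  have hn : 0 < nrm2 x := Real.sqrt_pos.2 (by positivity)
  have hsq := nrm2_sq x
  have ha0 : |x 0| = Real.sign (x 0) * x 0 := by
    rcases lt_or_gt_of_ne h0 with h | h
    · rw [abs_of_neg h, Real.sign_of_neg h]; ring
    · rw [abs_of_pos h, Real.sign_of_pos h]; ring
  have ha1 : |x 1| = Real.sign (x 1) * x 1 := by
    rcases lt_or_gt_of_ne h1 with h | h
    · rw [abs_of_neg h, Real.sign_of_neg h]; ring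
    · rw [abs_of_pos h, Real.sign_of_pos h]; ring
  refine ⟨?_, ?_, ?_⟩
  · ext i
    fin_cases i <;>
      simp [sampCov, hatW, Matrix.mulVec, dotProduct, Fin.sum_univ_two, hsq, ha1] <;> ring
  · ext i
    fin_cases i <;>
      simp [sampCov, hatW, Matrix.mulVec, dotProduct, Fin.sum_univ_two, ha0] <;> ring
  · ext i
    fin_cases i
    · simp [hatW, Matrix.mulVec, dotProduct, Fin.sum_univ_two, ha1]
      field_simp
      rw [hsq]
    · simp [hatW, Matrix.mulVec, dotProduct, Fin.sum_univ_two, ha0]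
      ring

lemma tendsto_ratio_half {u v : ℕ → ℝ} {K L : ℝ} (hu : ∀ k : ℕ, 0 < k → |u k - log k| ≤ K)
    (hv : ∀ k : ℕ, 0 < k → |v k - 2 * log k| ≤ L) :
    Tendsto (fun k => u k / v k) atTop (nhds (1 / 2)) := by
  have hlog : Tendsto (fun k : ℕ => log (k : ℝ)) atTop atTop :=
    Real.tendsto_log_atTop.comp tendsto_natCast_atTop_atTop
  have aux : ∀ (w : ℕ → ℝ) (c M : ℝ), (∀ k : ℕ, 0 < k → |w k - c * log k| ≤ M) →
      Tendsto (fun k => w k / log k) atTop (nhds c) := by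
    intro w c M hw
    have h1 : Tendsto (fun k : ℕ => M / log k) atTop (nhds 0) := hlog.const_div_atTop M
    rw [tendsto_iff_norm_sub_tendsto_zero]
    refine squeeze_zero' (Eventually.of_forall fun k => norm_nonneg _) ?_ h1
    filter_upwards [hlog.eventually_gt_atTop 0, eventually_gt_atTop 0] with k hk hk0
    have : w k / log k - c = (w k - c * log k) / log k := by field_simp
    rw [this, norm_div, Real.norm_of_nonneg hk.le]
    gcongr
    exact hw k hk0
  have h1 := (aux u 1 K (by simpa using hu)).div (aux v 2 L hv) (by norm_num)
  refine h1.congr' ?_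
  filter_upwards [hlog.eventually_gt_atTop 0] with k hk
  simp only [Pi.div_apply]
  rw [div_div_div_cancel_right₀ hk.ne']

open Matrix in
/-- For a two-dimensional zero-mean Gaussian `X` with positive definite
covariance and PCA with a single sample (`n = 1`, `Ĉ = X Xᵀ`): almost surely `Ĉ` has
eigenvalues `‖X‖²` and `0` (with the columns of `Ŵ` as eigenvectors) and the PCA output is
`Y = ŴᵀX = [sgn(X₂)‖X‖, 0]ᵀ`; moreover the relative information loss is `l(X→Y) = 1/2`. -/
theorem PCA_single_sample_two_dimensional
    {Ω : Type*} [MeasurableSpace Ω] (P : Measure Ω) [IsProbabilityMeasure P]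
    (X : Ω → (Fin 2 → ℝ)) (hX : Measurable X)
    (C : Matrix (Fin 2) (Fin 2) ℝ) (hCpos : C.PosDef)
    (hgauss : P.map X = volume.withDensity (fun x => ENNReal.ofReal (gaussDensity C x))) :
    (∀ᵐ ω ∂P,
      (sampCov (X ω)).mulVec (fun i => hatW (X ω) i 0) =
          (nrm2 (X ω)) ^ 2 • (fun i => hatW (X ω) i 0) ∧
      (sampCov (X ω)).mulVec (fun i => hatW (X ω) i 1) = 0 ∧
      Matrix.mulVec (hatW (X ω))ᵀ (X ω) = ![Real.sign (X ω 1) * nrm2 (X ω), 0]) ∧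
    Tendsto (fun k : ℕ =>
        condEnt P (fun ω i => qz k (X ω i))
            (fun ω => Matrix.mulVec (hatW (X ω))ᵀ (X ω)) /
          mEnt (P.map (fun ω i => qz k (X ω i)))) atTop (nhds (1 / 2)) := by
  obtain ⟨a, b, c, hf⟩ := gaussLike_gaussDensity C hCpos
  have hac : P.map X ≪ volume := by rw [hgauss]; exact withDensity_absolutelyContinuous _ _
  have hne : ∀ i, ∀ᵐ ω ∂P, X ω i ≠ 0 := fun i =>
    ae_of_ae_map hX.aemeasurable (hac.ae_le (ae_coord_ne_zero i))
  have hid := (hne 0).and (hne 1)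
  have hpm : IsProbabilityMeasure (P.map X) := Measure.isProbabilityMeasure_map hX.aemeasurable
  refine ⟨hid.mono fun ω hω => pca_identities hω.1 hω.2, ?_⟩
  have hY : (fun ω => Matrix.mulVec (hatW (X ω))ᵀ (X ω)) =ᵐ[P] radial ∘ X :=
    hid.mono fun ω hω => (pca_identities hω.1 hω.2).2.2
  obtain ⟨K, hK⟩ := condEntropy_quant hf (P.map X) hgauss
  obtain ⟨L, hL⟩ := entropy_quant hf (P.map X) hgauss
  refine tendsto_ratio_half (K := K) (L := L) (fun k hk => ?_) (fun k hk => ?_)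
  · have h1 : P.map (fun ω => Matrix.mulVec (hatW (X ω))ᵀ (X ω)) = (P.map X).map radial := by
      rw [Measure.map_congr hY, Measure.map_map measurable_radial hX]
    have h2 : P.map (fun ω => (Matrix.mulVec (hatW (X ω))ᵀ (X ω), fun i => qz k (X ω i))) =
        (P.map X).map fun x => (radial x, quant k x) := by
      rw [Measure.map_map (measurable_radial.prodMk (measurable_quant k)) hX]
      refine Measure.map_congr (hY.mono fun ω hω => ?_)
      exact Prod.ext hω rfl
    -- both conditional entropies depend only on the joint law of the two arguments
    have h3 : condEnt P (fun ω i => qz k (X ω i)) (fun ω => Matrix.mulVec (hatW (X ω))ᵀ (X ω)) =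
        condEnt (P.map X) (quant k) radial := by
      unfold condEnt
      simp only [condDistrib, h1, h2]
    rw [h3]
    exact hK k hk
  · have h1 : P.map (fun ω i => qz k (X ω i)) = (P.map X).map (quant k) := by
      rw [Measure.map_map (measurable_quant k) hX]; rfl
    rw [h1]
    exact hL k hk
end
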